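/- Let 1 ≤ i₁, i₂ ≤ n²/2 and j₁, j₂ ∈ {0,1}. If 2i₁−1 ≥ n²−2i₂+1 and i₁ ≤ i₂, then S_{2i₁,j₁}⊗S_{2i₂,j₂} ≅ ⊕_{l=0}^{n²−2i₂} S_{n²+2i₁−2i₂−2l, \overline{j₁+j₂+l}} and, symmetrically, if 2i₁−1 ≥ n²−2i₂+1 and i₁ > i₂, then S_{2i₁,j₁}⊗S_{2i₂,j₂} ≅ ⊕_{l=0}^{n²−2i₁} S_{n²−2i₁+2i₂−2l, \overline{j₁+j₂+l}}. -/

import Mathlib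

noncomputable section

open scoped TensorProduct

namespace QFL

/-- The defining relations of the quasi-Frobenius-Lusztig kernel `ũ_q(sl₂)`,
on the free algebra on four generators `K = ι 0`, `K̂ = ι 1`, `E = ι 2`, `F = ι 3`. -/
inductive Rel (k : Type) [Field k] (n : ℕ) (q : k) :
    FreeAlgebra k (Fin 4) → FreeAlgebra k (Fin 4) → Prop
  | Kord : Rel k n q (FreeAlgebra.ι k (0 : Fin 4) ^ n) 1
  | Khord : Rel k n q (FreeAlgebra.ι k (1 : Fin 4) ^ n)
      ((FreeAlgebra.ι k (0 : Fin 4) ^ (n - 1)) ^ 2)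
  | KKh : Rel k n q (FreeAlgebra.ι k (0 : Fin 4) * FreeAlgebra.ι k (1 : Fin 4))
      (FreeAlgebra.ι k (1 : Fin 4) * FreeAlgebra.ι k (0 : Fin 4))
  | KE : Rel k n q
      (FreeAlgebra.ι k (0 : Fin 4) * FreeAlgebra.ι k (2 : Fin 4) *
        FreeAlgebra.ι k (0 : Fin 4) ^ (n - 1))
      (q ^ n • FreeAlgebra.ι k (2 : Fin 4))
  | KF : Rel k n q
      (FreeAlgebra.ι k (0 : Fin 4) * FreeAlgebra.ι k (3 : Fin 4) *
        FreeAlgebra.ι k (0 : Fin 4) ^ (n - 1))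
      ((q ^ n)⁻¹ • FreeAlgebra.ι k (3 : Fin 4))
  | KhE : Rel k n q
      (FreeAlgebra.ι k (1 : Fin 4) * FreeAlgebra.ι k (2 : Fin 4) *
        FreeAlgebra.ι k (1 : Fin 4) ^ (n ^ 2 - 1))
      ((q ^ n * (q ^ 2)⁻¹) • FreeAlgebra.ι k (2 : Fin 4))
  | KhF : Rel k n q
      (FreeAlgebra.ι k (1 : Fin 4) * FreeAlgebra.ι k (3 : Fin 4) *
        FreeAlgebra.ι k (1 : Fin 4) ^ (n ^ 2 - 1))
      (((q ^ n)⁻¹ * q ^ 2) • FreeAlgebra.ι k (3 : Fin 4))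
  | Enil : Rel k n q (FreeAlgebra.ι k (2 : Fin 4) ^ n ^ 2) 0
  | Fnil : Rel k n q (FreeAlgebra.ι k (3 : Fin 4) ^ n ^ 2) 0
  | EF : Rel k n q
      (FreeAlgebra.ι k (3 : Fin 4) * FreeAlgebra.ι k (2 : Fin 4) -
        q⁻¹ • (FreeAlgebra.ι k (2 : Fin 4) * FreeAlgebra.ι k (3 : Fin 4)))
      (1 - FreeAlgebra.ι k (0 : Fin 4) ^ (n - 1) * FreeAlgebra.ι k (1 : Fin 4))

/-- The algebra `ũ_q(sl₂)` as the quotient of the free algebra by the defining relations. -/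
abbrev U (k : Type) [Field k] (n : ℕ) (q : k) := RingQuot (Rel k n q)

variable (k : Type) [Field k] (n : ℕ) (q : k)

def K : U k n q := RingQuot.mkAlgHom k (Rel k n q) (FreeAlgebra.ι k (0 : Fin 4))
def Kh : U k n q := RingQuot.mkAlgHom k (Rel k n q) (FreeAlgebra.ι k (1 : Fin 4))
def E : U k n q := RingQuot.mkAlgHom k (Rel k n q) (FreeAlgebra.ι k (2 : Fin 4))
def F : U k n q := RingQuot.mkAlgHom k (Rel k n q) (FreeAlgebra.ι k (3 : Fin 4))

/-- `K⁻¹ = K^(n-1)`. -/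
def Kinv : U k n q := K k n q ^ (n - 1)
/-- `K̂⁻¹ = K̂^(n²-1)`. -/
def Khinv : U k n q := Kh k n q ^ (n ^ 2 - 1)

/-- `φ_{2i} = (2/n²) Σ_{t<n²/2} q^{-2it} (K⁻¹K̂)^t`. -/
def phi (i : ℕ) : U k n q :=
  ((n ^ 2 : k)⁻¹ * 2) • ∑ t ∈ Finset.range (n ^ 2 / 2),
    (q⁻¹ ^ (2 * i * t)) • (Kinv k n q * Kh k n q) ^ t

/-- `𝟙₀ = (1/2)(1 + KK̂^(n/2))` and `𝟙₁ = (1/2)(1 - KK̂^(n/2))`. -/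
def oneJ (j : ℕ) : U k n q :=
  if j = 0 then (2 : k)⁻¹ • (1 + K k n q * Kh k n q ^ (n / 2))
  else (2 : k)⁻¹ • (1 - K k n q * Kh k n q ^ (n / 2))

/-- The idempotent `e_{2i,j} = φ_{2i} 𝟙_j`. -/
def eIdem (i j : ℕ) : U k n q := phi k n q i * oneJ k n q j

/-- `α_{2i,j} = F^(n²-1) e_{2i,j}`. -/
def alpha (i j : ℕ) : U k n q := F k n q ^ (n ^ 2 - 1) * eIdem k n q i j

/-- `β_{2i,j} = E^(2i-2) α_{2i,j}`. -/
def beta (i j : ℕ) : U k n q := E k n q ^ (2 * i - 2) * alpha k n q i j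

/-- The Gaussian number `s_q = 1 + q + ⋯ + q^(s-1)`. -/
def gauss (x : k) (s : ℕ) : k := ∑ t ∈ Finset.range s, x ^ t

/-- The span of the PBW-type monomials `F^a K^c K̂^d E^b` with `a ≤ n²-2`, `b ≤ n²-1`,
`c ≤ n-1`, `d ≤ n²-1`. -/
def pbw : Submodule k (U k n q) :=
  Submodule.span k {x | ∃ a b c d : ℕ, a ≤ n ^ 2 - 2 ∧ b ≤ n ^ 2 - 1 ∧ c ≤ n - 1 ∧
    d ≤ n ^ 2 - 1 ∧ x = F k n q ^ a * K k n q ^ c * Kh k n q ^ d * E k n q ^ b}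

/-- `γ_{2i,j}`: the unique element of the PBW span with `F·γ = β_{2i,j}`. -/
def gam (i j : ℕ) : U k n q :=
  @dite _ (∃! x, x ∈ pbw k n q ∧ F k n q * x = beta k n q i j)
    (Classical.propDecidable _) (fun h => h.choose) (fun _ => 0)

/-- The left ideal `P_{2i,j} = u·γ_{2i,j}`. -/
def P (i j : ℕ) : Submodule (U k n q) (U k n q) :=
  Submodule.span (U k n q) {gam k n q i j}

/-- `S_{2i,j} = Soc(P_{2i,j})`, the sum of all simple submodules of `P_{2i,j}`. -/
def S (i j : ℕ) : Submodule (U k n q) (U k n q) :=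
  sSup {N : Submodule (U k n q) (U k n q) | N ≤ P k n q i j ∧ IsSimpleModule (U k n q) N}

end QFL

namespace QFL

variable (k : Type) [Field k] (n : ℕ) (q : k)

/-- `1_r = (1/n) Σ_{t<n} q̄^{(n-r)t} K^t`. -/
def oneIdem (r : ℕ) : U k n q :=
  (n : k)⁻¹ • ∑ t ∈ Finset.range n, ((q ^ n) ^ ((n - r) * t)) • K k n q ^ t

/-- `♭ = Σ_{r<n} q^{-r} 1_r` (an invertible element of `u`). -/
def flat : U k n q := ∑ r ∈ Finset.range n, (q⁻¹ ^ r) • oneIdem k n q r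

/-- The property that `Δ` is the comultiplication of `ũ_q(sl₂)` (which exists and is the
unique algebra map with these values on the generators). -/
def IsComul (Δ : U k n q →ₐ[k] (U k n q ⊗[k] U k n q)) : Prop :=
  Δ (K k n q) = K k n q ⊗ₜ[k] K k n q ∧
  Δ (Kh k n q) = Kh k n q ⊗ₜ[k] Kh k n q ∧
  Δ (E k n q) = (E k n q ⊗ₜ[k] Ring.inverse (flat k n q)) +
    (Kinv k n q ⊗ₜ[k] (oneIdem k n q 0 * E k n q)) +
    ((1 : U k n q) ⊗ₜ[k] ((∑ r ∈ Finset.Icc 1 (n - 1), oneIdem k n q r) * E k n q)) ∧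
  Δ (F k n q) = (F k n q ⊗ₜ[k] flat k n q) +
    ((Kinv k n q * Kh k n q) ⊗ₜ[k]
      (F k n q * ∑ r ∈ Finset.Icc 1 (n - 1), oneIdem k n q r)) +
    (Kh k n q ⊗ₜ[k] (F k n q * oneIdem k n q 0))

instance (N : Submodule (U k n q) (U k n q)) : SMulCommClass (U k n q) k N := by
  constructor
  intro a b m
  ext
  show a • b • (m : U k n q) = b • a • (m : U k n q)
  rw [smul_comm]

/-- The `u`-module structure on `M ⊗[k] N` obtained from left `u`-modules `M`, `N` by letting
`u` act through the comultiplication `Δ`. -/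
def tensorModule (Δ : U k n q →ₐ[k] (U k n q ⊗[k] U k n q))
    (M N : Type) [AddCommGroup M] [Module k M] [Module (U k n q) M]
    [IsScalarTower k (U k n q) M] [SMulCommClass (U k n q) k M]
    [AddCommGroup N] [Module k N] [Module (U k n q) N]
    [IsScalarTower k (U k n q) N] [SMulCommClass (U k n q) k N] :
    Module (U k n q) (M ⊗[k] N) :=
  Module.compHom (M ⊗[k] N)
    ((Module.endTensorEndAlgHom (R := k) (S := k) (A := k) (M := M) (N := N)).comp
      ((Algebra.TensorProduct.map (Algebra.lsmul k k M) (Algebra.lsmul k k N)).comp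
        Δ)).toRingHom

end QFL

namespace QFL

/-! ### Generic commutation formulas -/

section Generic

variable {k : Type} [Field k]

theorem gauss_succ (x : k) (s : ℕ) : gauss k x (s + 1) = gauss k x s + x ^ s := by
  simp [gauss, Finset.sum_range_succ]

theorem gauss_succ' (x : k) (s : ℕ) : gauss k x (s + 1) = 1 + x * gauss k x s := by
  simp [gauss, Finset.sum_range_succ', Finset.mul_sum, pow_succ']
  ring

theorem gauss_zero (x : k) : gauss k x 0 = 0 := by simp [gauss]

theorem gauss_mul (x : k) (s : ℕ) : gauss k x s * (x - 1) = x ^ s - 1 := by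
  simpa [gauss] using geom_sum_mul x s

theorem gauss_prim_zero {x : k} {N : ℕ} (hN : 1 < N) (hx : IsPrimitiveRoot x N) :
    gauss k x N = 0 := hx.geom_sum_eq_zero hN

theorem gauss_ne_zero {x : k} {N : ℕ} (hx : IsPrimitiveRoot x N) {s : ℕ} (h0 : 0 < s)
    (h1 : s < N) : gauss k x s ≠ 0 := by
  intro h
  have := gauss_mul x s
  rw [h, zero_mul] at this
  exact hx.pow_ne_one_of_pos_of_lt h0.ne' h1 (sub_eq_zero.mp this.symm)

variable {A : Type} [Ring A] [Algebra k A] {q : k} {E F g : A}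

theorem skew_pow {c : k} {x y : A} (h : x * y = c • (y * x)) (s : ℕ) :
    x * y ^ s = c ^ s • (y ^ s * x) := by
  induction s with
  | zero => simp
  | succ s ih =>
    rw [pow_succ, ← mul_assoc, ih, smul_mul_assoc, mul_assoc, h, mul_smul_comm, smul_smul,
      pow_succ, mul_assoc]

theorem skew_pow_left {c : k} {x y : A} (h : x * y = c • (y * x)) (s : ℕ) :
    x ^ s * y = c ^ s • (y * x ^ s) := by
  induction s with
  | zero => simp
  | succ s ih =>
    rw [pow_succ', mul_assoc, ih, mul_smul_comm, ← mul_assoc, h, smul_mul_assoc, smul_smul,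
      pow_succ, mul_assoc]

theorem FE_pow (hEF : F * E = q⁻¹ • (E * F) + (1 - g)) (hgE : g * E = q⁻¹ ^ 2 • (E * g))
    (s : ℕ) : F * E ^ (s + 1) = q⁻¹ ^ (s + 1) • (E ^ (s + 1) * F) +
      (gauss k q⁻¹ (s + 1)) • (E ^ s - q⁻¹ ^ s • (E ^ s * g)) := by
  induction s with
  | zero => simp [gauss_succ, gauss_zero, hEF]
  | succ s ih =>
    have h1 : F * E ^ (s + 2) = q⁻¹ • (E * (F * E ^ (s + 1))) + (E ^ (s + 1) - g * E ^ (s + 1)) := by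
      rw [pow_succ' E (s + 1), ← mul_assoc, hEF]
      simp only [add_mul, sub_mul, smul_mul_assoc, one_mul, mul_assoc]
    rw [h1, ih, skew_pow hgE]
    have e1 := gauss_succ (q⁻¹) (s + 1)
    have e2 := gauss_succ' (q⁻¹) (s + 1)
    simp only [mul_add, mul_sub, mul_smul_comm, ← mul_assoc, ← pow_succ']
    linear_combination (norm := module) (-e2) • E ^ (s + 1) + (q⁻¹ ^ (s+1) * e1) • (E ^ (s + 1) * g)

theorem EF_pow (hq : q ≠ 0) (hEF : F * E = q⁻¹ • (E * F) + (1 - g))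
    (hgF : g * F = q ^ 2 • (F * g))
    (s : ℕ) : E * F ^ (s + 1) = q ^ (s + 1) • (F ^ (s + 1) * E) -
      (q * gauss k q (s + 1)) • (F ^ s - q ^ s • (F ^ s * g)) := by
  have hEF' : E * F = q • (F * E) - q • (1 - g) := by
    rw [hEF, smul_add, smul_smul, mul_inv_cancel₀ hq]; simp
  induction s with
  | zero => simp [gauss_succ, gauss_zero, hEF']
  | succ s ih =>
    have h1 : E * F ^ (s + 2) = q • (F * (E * F ^ (s + 1))) - q • (F ^ (s + 1) - g * F ^ (s + 1)) := by
      rw [pow_succ' F (s + 1), ← mul_assoc, hEF']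
      simp only [sub_mul, smul_mul_assoc, one_mul, mul_assoc, smul_sub]
    rw [h1, ih, skew_pow hgF]
    have e1 := gauss_succ (q) (s + 1)
    have e2 := gauss_succ' (q) (s + 1)
    simp only [mul_add, mul_sub, mul_smul_comm, ← mul_assoc, ← pow_succ']
    linear_combination (norm := module) (q * e2) • F ^ (s + 1) - (q * q ^ (s+1) * e1) • (F ^ (s + 1) * g)

end Generic

/-! ### The relations in `U` -/

section Relations

variable {k : Type} [Field k] {n : ℕ} {q : k}

/-- `g = K⁻¹ K̂`. -/
def gg (k : Type) [Field k] (n : ℕ) (q : k) : U k n q := Kinv k n q * Kh k n q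
/-- `z = K K̂^(n/2)`. -/
def zz (k : Type) [Field k] (n : ℕ) (q : k) : U k n q := K k n q * Kh k n q ^ (n / 2)

theorem rel {x y : FreeAlgebra k (Fin 4)} (h : Rel k n q x y) :
    RingQuot.mkAlgHom k (Rel k n q) x = RingQuot.mkAlgHom k (Rel k n q) y :=
  RingQuot.mkAlgHom_rel k h

theorem K_pow_n : K k n q ^ n = 1 := by
  have := rel (Rel.Kord (k := k) (n := n) (q := q))
  simpa [K] using this

theorem Kh_pow_n : Kh k n q ^ n = (K k n q ^ (n - 1)) ^ 2 := by
  have := rel (Rel.Khord (k := k) (n := n) (q := q))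
  simpa only [map_pow, K, Kh] using this

theorem KKh : K k n q * Kh k n q = Kh k n q * K k n q := by
  have := rel (Rel.KKh (k := k) (n := n) (q := q))
  simpa only [map_mul, K, Kh] using this

theorem Kh_pow_N : Kh k n q ^ (n ^ 2) = 1 := by
  rw [sq, pow_mul, Kh_pow_n, ← pow_mul, ← pow_mul, show (n - 1) * (2 * n) = n * ((n - 1) * 2) by ring, pow_mul, K_pow_n, one_pow]

theorem K_mul_Kinv (hn : 0 < n) : K k n q ^ (n - 1) * K k n q = 1 := by
  rw [← pow_succ, Nat.sub_add_cancel hn, K_pow_n]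

theorem Kh_mul_Khinv (hn : 0 < n) : Kh k n q ^ (n ^ 2 - 1) * Kh k n q = 1 := by
  rw [← pow_succ, Nat.sub_add_cancel (Nat.pow_pos hn), Kh_pow_N]

theorem KE (hn : 0 < n) : K k n q * E k n q = q ^ n • (E k n q * K k n q) := by
  have := rel (Rel.KE (k := k) (n := n) (q := q))
  simp only [map_mul, map_pow, map_smul] at this
  change K k n q * E k n q * K k n q ^ (n - 1) = q ^ n • E k n q at this
  rw [← smul_mul_assoc, ← this, mul_assoc _ _ (K k n q), K_mul_Kinv hn, mul_one]

theorem KF (hn : 0 < n) : K k n q * F k n q = (q ^ n)⁻¹ • (F k n q * K k n q) := by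
  have := rel (Rel.KF (k := k) (n := n) (q := q))
  simp only [map_mul, map_pow, map_smul] at this
  change K k n q * F k n q * K k n q ^ (n - 1) = _ • F k n q at this
  rw [← smul_mul_assoc, ← this, mul_assoc _ _ (K k n q), K_mul_Kinv hn, mul_one]

theorem KhE (hn : 0 < n) : Kh k n q * E k n q = (q ^ n * (q ^ 2)⁻¹) • (E k n q * Kh k n q) := by
  have := rel (Rel.KhE (k := k) (n := n) (q := q))
  simp only [map_mul, map_pow, map_smul] at this
  change Kh k n q * E k n q * Kh k n q ^ (n ^ 2 - 1) = _ • E k n q at this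
  rw [← smul_mul_assoc, ← this, mul_assoc _ _ (Kh k n q), Kh_mul_Khinv hn, mul_one]

theorem KhF (hn : 0 < n) : Kh k n q * F k n q = ((q ^ n)⁻¹ * q ^ 2) • (F k n q * Kh k n q) := by
  have := rel (Rel.KhF (k := k) (n := n) (q := q))
  simp only [map_mul, map_pow, map_smul] at this
  change Kh k n q * F k n q * Kh k n q ^ (n ^ 2 - 1) = _ • F k n q at this
  rw [← smul_mul_assoc, ← this, mul_assoc _ _ (Kh k n q), Kh_mul_Khinv hn, mul_one]

theorem E_nil : E k n q ^ n ^ 2 = 0 := by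
  have := rel (Rel.Enil (k := k) (n := n) (q := q))
  simpa only [map_pow, map_zero, E] using this

theorem F_nil : F k n q ^ n ^ 2 = 0 := by
  have := rel (Rel.Fnil (k := k) (n := n) (q := q))
  simpa only [map_pow, map_zero, F] using this

theorem E_nil' {s : ℕ} (h : n ^ 2 ≤ s) : E k n q ^ s = 0 := pow_eq_zero_of_le h E_nil
theorem F_nil' {s : ℕ} (h : n ^ 2 ≤ s) : F k n q ^ s = 0 := pow_eq_zero_of_le h F_nil

theorem EFrel : F k n q * E k n q = q⁻¹ • (E k n q * F k n q) + (1 - gg k n q) := by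
  have := rel (Rel.EF (k := k) (n := n) (q := q))
  simp only [map_mul, map_pow, map_smul, map_sub, map_one] at this
  change F k n q * E k n q - q⁻¹ • (E k n q * F k n q) = 1 - gg k n q at this
  rw [← this]; abel

theorem gE (hn : 0 < n) (hq : IsPrimitiveRoot q (n ^ 2)) :
    gg k n q * E k n q = q⁻¹ ^ 2 • (E k n q * gg k n q) := by
  have hq0 : q ≠ 0 := hq.ne_zero (by positivity)
  unfold gg Kinv
  rw [mul_assoc, KhE hn, mul_smul_comm, ← mul_assoc (K k n q ^ (n - 1)), skew_pow_left (KE (k := k) (q := q) hn) (n - 1), smul_mul_assoc,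
    smul_smul, mul_assoc (E k n q)]
  congr 1
  have : (q ^ n) ^ (n - 1) * q ^ n = 1 := by
    rw [← pow_succ, Nat.sub_add_cancel hn, ← pow_mul, ← sq, hq.pow_eq_one]
  rw [inv_pow]
  linear_combination (q ^ 2)⁻¹ * this

theorem gF (hn : 0 < n) (hq : IsPrimitiveRoot q (n ^ 2)) :
    gg k n q * F k n q = q ^ 2 • (F k n q * gg k n q) := by
  have hq0 : q ≠ 0 := hq.ne_zero (by positivity)
  unfold gg Kinv
  rw [mul_assoc, KhF hn, mul_smul_comm, ← mul_assoc (K k n q ^ (n - 1)), skew_pow_left (KF hn), smul_mul_assoc,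
    smul_smul, mul_assoc (F k n q)]
  congr 1
  have : ((q ^ n)⁻¹) ^ (n - 1) * (q ^ n)⁻¹ = 1 := by
    rw [← pow_succ, Nat.sub_add_cancel hn, inv_pow, ← pow_mul, ← sq, hq.pow_eq_one, inv_one]
  linear_combination (q ^ 2) * this

theorem half (hn : 0 < n) (h4 : 4 ∣ n) (hq : IsPrimitiveRoot q (n ^ 2)) :
    q ^ (n ^ 2 / 2) = -1 := by
  have h : (q ^ (n ^ 2 / 2)) ^ 2 = 1 := by
    rw [← pow_mul, Nat.div_mul_cancel, hq.pow_eq_one]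
    exact (Dvd.dvd.trans (by norm_num) h4).trans (dvd_pow_self n two_ne_zero)
  rcases eq_or_eq_neg_of_sq_eq_sq _ 1 (h.trans (one_pow 2).symm) with h | h
  · exact absurd h (hq.pow_ne_one_of_pos_of_lt (by
      have : 4 ≤ n := Nat.le_of_dvd hn h4
      have : 2 ≤ n ^ 2 := by nlinarith
      omega) (Nat.div_lt_self (by positivity) one_lt_two))
  · exact h

end Relations
end QFL

namespace QFL

section Group

variable {k : Type} [Field k] {n : ℕ} {q : k}

theorem comm_K_Kh : Commute (K k n q) (Kh k n q) := KKh

theorem comm_K_gg : Commute (K k n q) (gg k n q) :=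
  ((Commute.refl _).pow_right _).mul_right comm_K_Kh
theorem comm_Kh_gg : Commute (Kh k n q) (gg k n q) :=
  (comm_K_Kh.symm.pow_right _).mul_right (Commute.refl _)
theorem comm_K_zz : Commute (K k n q) (zz k n q) :=
  (Commute.refl _).mul_right (comm_K_Kh.pow_right _)
theorem comm_Kh_zz : Commute (Kh k n q) (zz k n q) :=
  (comm_K_Kh.symm).mul_right ((Commute.refl _).pow_right _)
theorem comm_gg_zz : Commute (gg k n q) (zz k n q) :=
  (comm_K_zz.pow_left _).mul_left comm_Kh_zz

theorem Kh_eq (hn : 0 < n) : Kh k n q = K k n q * gg k n q := by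
  unfold gg Kinv
  rw [← mul_assoc, ← pow_succ', Nat.sub_add_cancel hn, K_pow_n, one_mul]

theorem gg_pow (s : ℕ) : gg k n q ^ s = K k n q ^ ((n - 1) * s) * Kh k n q ^ s := by
  unfold gg Kinv
  rw [(comm_K_Kh.pow_left _).mul_pow, ← pow_mul]

theorem K_pow_mod {a : ℕ} (h : n ∣ a) : K k n q ^ a = 1 := by
  obtain ⟨c, rfl⟩ := h
  rw [pow_mul, K_pow_n, one_pow]

theorem Kh_pow_mul_n (c : ℕ) : Kh k n q ^ (n * c) = K k n q ^ ((n - 1) * 2 * c) := by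
  rw [pow_mul, Kh_pow_n, ← pow_mul, ← pow_mul, mul_assoc]

theorem gg_ord (hn : 0 < n) (h4 : 4 ∣ n) : gg k n q ^ (n ^ 2 / 2) = 1 := by
  obtain ⟨m, rfl⟩ := h4
  rw [show (4 * m) ^ 2 / 2 = 4 * m * (2 * m) by rw [show (4*m)^2 = 4 * m * (2 * m) * 2 by ring]; simp,
    gg_pow, Kh_pow_mul_n, ← pow_add]
  apply K_pow_mod
  exact ⟨(4 * m - 1) * (2 * m) + (4 * m - 1), by ring⟩

theorem zz_sq (hn : 0 < n) (h4 : 4 ∣ n) : zz k n q * zz k n q = 1 := by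
  rw [← sq]
  unfold zz
  rw [(comm_K_Kh.pow_right _).mul_pow, ← pow_mul, Nat.div_mul_cancel (dvd_trans (by norm_num) h4),
    Kh_pow_n, ← pow_mul, ← pow_add]
  apply K_pow_mod
  exact ⟨2, by omega⟩

theorem K_eq (hn : 0 < n) (h4 : 4 ∣ n) :
    K k n q = zz k n q * gg k n q ^ (n ^ 2 / 4 - n / 2) := by
  obtain ⟨m, rfl⟩ := h4
  have hm : 0 < m := by omega
  have e1 : (4 * m) ^ 2 / 4 = 4 * m * m := by
    rw [show (4*m)^2 = 4 * m * m * 4 by ring]; simp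
  have e2 : 4 * m / 2 = 2 * m := by omega
  rw [gg_pow]
  unfold zz
  rw [e1, e2, mul_assoc, ← mul_assoc (Kh k (4 * m) q ^ (2 * m)),
    ← (comm_K_Kh.pow_pow ((4 * m - 1) * (4 * m * m - 2 * m)) (2 * m)).eq, mul_assoc, ← pow_add,
    show 2 * m + (4 * m * m - 2 * m) = 4 * m * m by
      have : 2 * m ≤ 4 * m * m := by nlinarith
      omega, Kh_pow_mul_n, ← pow_add, ← pow_succ']
  have : (4 * m - 1) * (4 * m * m - 2 * m) + (4 * m - 1) * 2 * m + 1
      = 4 * m * ((4 * m - 1) * m) + 1 := by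
    have h : 4 * m * m - 2 * m + 2 * m = 4 * m * m := Nat.sub_add_cancel (by nlinarith)
    calc _ = (4 * m - 1) * (4 * m * m - 2 * m + 2 * m) + 1 := by ring
      _ = _ := by rw [h]; ring
  rw [this, pow_succ, K_pow_mod ⟨_, rfl⟩, one_mul]

theorem zE (hn : 0 < n) (h4 : 4 ∣ n) (hq : IsPrimitiveRoot q (n ^ 2)) :
    zz k n q * E k n q = (-1 : k) • (E k n q * zz k n q) := by
  have hq0 : q ≠ 0 := hq.ne_zero (by positivity)
  unfold zz
  rw [mul_assoc, skew_pow_left (KhE (k := k) (q := q) hn) (n / 2), mul_smul_comm, ← mul_assoc,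
    KE hn, smul_mul_assoc, smul_smul, mul_assoc]
  congr 1
  obtain ⟨m, hm⟩ := h4
  have h := half hn ⟨m, hm⟩ hq
  have e : n / 2 * 2 = n := by omega
  have e3 : n ^ 2 / 2 = n * (n / 2) := by
    rw [sq]; exact Nat.mul_div_assoc _ ⟨2 * m, by omega⟩
  rw [mul_pow, ← pow_mul, ← e3, h, inv_pow, ← pow_mul, mul_comm 2, e]
  field_simp

theorem zF (hn : 0 < n) (h4 : 4 ∣ n) (hq : IsPrimitiveRoot q (n ^ 2)) :
    zz k n q * F k n q = (-1 : k) • (F k n q * zz k n q) := by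
  have hq0 : q ≠ 0 := hq.ne_zero (by positivity)
  unfold zz
  rw [mul_assoc, skew_pow_left (KhF (k := k) (q := q) hn) (n / 2), mul_smul_comm, ← mul_assoc,
    KF hn, smul_mul_assoc, smul_smul, mul_assoc]
  congr 1
  obtain ⟨m, hm⟩ := h4
  have h := half hn ⟨m, hm⟩ hq
  have e : n / 2 * 2 = n := by omega
  have e3 : n ^ 2 / 2 = n * (n / 2) := by
    rw [sq]; exact Nat.mul_div_assoc _ ⟨2 * m, by omega⟩
  rw [mul_pow, inv_pow, ← pow_mul, ← e3, h, ← pow_mul, mul_comm 2, e]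
  field_simp

end Group

/-! ### Generation -/

section Gen

variable {k : Type} [Field k] {n : ℕ} {q : k}

theorem U_induction {p : U k n q → Prop} (hs : ∀ c : k, p (algebraMap k _ c))
    (hsm : ∀ (c : k) x, p x → p (c • x))
    (hadd : ∀ x y, p x → p y → p (x + y)) (hK : ∀ x, p x → p (K k n q * x))
    (hKh : ∀ x, p x → p (Kh k n q * x)) (hE : ∀ x, p x → p (E k n q * x))
    (hF : ∀ x, p x → p (F k n q * x)) (x : U k n q) : p x := by
  obtain ⟨y, rfl⟩ := RingQuot.mkAlgHom_surjective k (Rel k n q) x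
  suffices h : ∀ z : U k n q, p z → p (RingQuot.mkAlgHom k (Rel k n q) y * z) by
    simpa using h 1 (by simpa using hs 1)
  induction y using FreeAlgebra.induction with
  | grade0 r =>
    intro z hz
    rw [AlgHom.commutes, ← Algebra.smul_def]
    exact hsm r z hz
  | grade1 x =>
    intro z hz
    fin_cases x
    exacts [hK z hz, hKh z hz, hE z hz, hF z hz]
  | mul a b ha hb => intro z hz; rw [map_mul, mul_assoc]; exact ha _ (hb _ hz)
  | add a b ha hb => intro z hz; rw [map_add, add_mul]; exact hadd _ _ (ha _ hz) (hb _ hz)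

variable {X Y : Type} [AddCommGroup X] [Module k X] [Module (U k n q) X]
    [IsScalarTower k (U k n q) X] [AddCommGroup Y] [Module k Y] [Module (U k n q) Y]
    [IsScalarTower k (U k n q) Y]

theorem stable_of_gens (W : Submodule k X) (hK : ∀ x ∈ W, K k n q • x ∈ W)
    (hKh : ∀ x ∈ W, Kh k n q • x ∈ W) (hE : ∀ x ∈ W, E k n q • x ∈ W)
    (hF : ∀ x ∈ W, F k n q • x ∈ W) (u : U k n q) : ∀ x ∈ W, u • x ∈ W := by
  induction u using U_induction with
  | hs c => intro x hx; rw [algebraMap_smul]; exact W.smul_mem _ hx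
  | hsm c a ha => intro x hx; rw [smul_assoc]; exact W.smul_mem _ (ha x hx)
  | hadd a b ha hb => intro x hx; rw [add_smul]; exact W.add_mem (ha x hx) (hb x hx)
  | hK a ha => intro x hx; rw [mul_smul]; exact hK _ (ha x hx)
  | hKh a ha => intro x hx; rw [mul_smul]; exact hKh _ (ha x hx)
  | hE a ha => intro x hx; rw [mul_smul]; exact hE _ (ha x hx)
  | hF a ha => intro x hx; rw [mul_smul]; exact hF _ (ha x hx)

theorem map_smul_of_gens (f : X →ₗ[k] Y) (hK : ∀ x, f (K k n q • x) = K k n q • f x)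
    (hKh : ∀ x, f (Kh k n q • x) = Kh k n q • f x) (hE : ∀ x, f (E k n q • x) = E k n q • f x)
    (hF : ∀ x, f (F k n q • x) = F k n q • f x) (u : U k n q) :
    ∀ x, f (u • x) = u • f x := by
  induction u using U_induction with
  | hs c => intro x; rw [algebraMap_smul, algebraMap_smul, map_smul]
  | hsm c a ha => intro x; rw [smul_assoc, smul_assoc, map_smul, ha]
  | hadd a b ha hb => intro x; rw [add_smul, add_smul, map_add, ha, hb]
  | hK a ha => intro x; rw [mul_smul, mul_smul, hK, ha]
  | hKh a ha => intro x; rw [mul_smul, mul_smul, hKh, ha]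
  | hE a ha => intro x; rw [mul_smul, mul_smul, hE, ha]
  | hF a ha => intro x; rw [mul_smul, mul_smul, hF, ha]

end Gen
end QFL

namespace QFL

/-- The standing hypotheses. -/
structure Hyp (k : Type) [Field k] (n : ℕ) (q : k) : Prop where
  hn : 0 < n
  h4 : 4 ∣ n
  hq : IsPrimitiveRoot q (n ^ 2)

section Low

variable {k : Type} [Field k] {n : ℕ} {q : k}

theorem Hyp.q0 (H : Hyp k n q) : q ≠ 0 := H.hq.ne_zero (pow_pos H.hn 2).ne'

theorem Hyp.hqi (H : Hyp k n q) : IsPrimitiveRoot q⁻¹ (n ^ 2) := H.hq.inv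

theorem Hyp.N16 (H : Hyp k n q) : 16 ≤ n ^ 2 := by
  have : 4 ≤ n := Nat.le_of_dvd H.hn H.h4
  nlinarith

theorem Hyp.even (H : Hyp k n q) : 4 ∣ n ^ 2 := H.h4.trans (dvd_pow_self n two_ne_zero)

variable {X Y : Type} [AddCommGroup X] [Module k X] [Module (U k n q) X]
    [IsScalarTower k (U k n q) X] [AddCommGroup Y] [Module k Y] [Module (U k n q) Y]
    [IsScalarTower k (U k n q) Y]

theorem lowF (H : Hyp k n q) {v : X} {l : k} (hF : F k n q • v = 0)
    (hg : gg k n q • v = l • v) (s : ℕ) :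
    F k n q • (E k n q ^ (s + 1) • v) =
      (gauss k q⁻¹ (s + 1) * (1 - q⁻¹ ^ s * l)) • (E k n q ^ s • v) := by
  rw [← mul_smul, FE_pow EFrel (gE H.hn H.hq)]
  simp only [add_smul, sub_smul, mul_smul, smul_assoc, hF, hg, smul_zero, zero_add, one_smul,
    smul_comm (E k n q ^ s) l v]

theorem skew_smul {c l : k} {x y : U k n q} {v : X} (h : x * y = c • (y * x))
    (hv : x • v = l • v) (s : ℕ) : x • (y ^ s • v) = (c ^ s * l) • (y ^ s • v) := by
  rw [← mul_smul, skew_pow h, smul_assoc, mul_smul, hv, smul_comm (y ^ s) l v, smul_smul]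

theorem pow_smul_eig {l : k} {x : U k n q} {v : X}
    (hv : x • v = l • v) (s : ℕ) : x ^ s • v = l ^ s • v := by
  induction s with
  | zero => simp
  | succ s ih => rw [pow_succ, mul_smul, hv, smul_comm, ih, smul_smul, pow_succ']

theorem K_eig (H : Hyp k n q) {l e : k} {v : X} (hg : gg k n q • v = l • v)
    (hz : zz k n q • v = e • v) : K k n q • v = (l ^ (n ^ 2 / 4 - n / 2) * e) • v := by
  rw [K_eq H.hn H.h4, mul_smul, pow_smul_eig hg, smul_comm, hz, smul_smul]

theorem Kh_eig (H : Hyp k n q) {l e : k} {v : X} (hg : gg k n q • v = l • v)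
    (hz : zz k n q • v = e • v) : Kh k n q • v = (l ^ (n ^ 2 / 4 - n / 2) * e * l) • v := by
  rw [Kh_eq H.hn, mul_smul, hg, smul_comm, K_eig H hg hz, smul_smul, mul_comm]

theorem nil_top {v : X} {d : ℕ} (hE : E k n q ^ d • v = 0) (f : ℕ → k) (s₀ : ℕ) (hs : s₀ < d)
    (h : ∀ s < s₀, f s = 0) :
    E k n q ^ (d - 1 - s₀) • ∑ s ∈ Finset.range d, f s • E k n q ^ s • v =
      f s₀ • E k n q ^ (d - 1) • v := by
  rw [Finset.smul_sum, Finset.sum_eq_single s₀]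
  · rw [smul_comm, ← mul_smul, ← pow_add, Nat.sub_add_cancel (by omega)]
  · intro s _ hne
    rcases lt_or_gt_of_ne hne with h' | h'
    · rw [h s h', zero_smul, smul_zero]
    · rw [smul_comm, ← mul_smul, ← pow_add,
        show d - 1 - s₀ + s = (d - 1 - s₀ + s - d) + d by omega, pow_add, mul_smul, hE, smul_zero,
        smul_zero]
  · intro h'; exact absurd (Finset.mem_range.mpr hs) h'

theorem nil_coeff {v : X} {d : ℕ} (hE : E k n q ^ d • v = 0) (hE' : E k n q ^ (d - 1) • v ≠ 0)
    (f : ℕ → k) (h : ∑ s ∈ Finset.range d, f s • E k n q ^ s • v = 0) : ∀ s < d, f s = 0 := by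
  intro s
  induction s using Nat.strong_induction_on with
  | _ s ih =>
    intro hs
    have := nil_top hE f s hs (fun t ht => ih t ht (ht.trans hs))
    rw [h, smul_zero] at this
    exact (smul_eq_zero.mp this.symm).resolve_right hE'

variable (k n q) in
/-- `v` is a lowest weight vector presenting `X` as the simple module of dimension `d`
and parity `j`. -/
structure IsTy (X : Type) [AddCommGroup X] [Module k X] [Module (U k n q) X]
    (d j : ℕ) (v : X) : Prop where
  hF : F k n q • v = 0
  hg : gg k n q • v = q ^ (d - 1) • v
  hz : zz k n q • v = (-1 : k) ^ j • v
  hE : E k n q ^ d • v = 0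
  hE' : E k n q ^ (d - 1) • v ≠ 0
  sp : ∀ x : X, x ∈ Submodule.span k (Set.range fun s : ℕ => E k n q ^ s • v)
  hd : 0 < d
  hdN : d ≤ n ^ 2

/-- Structure constants. -/
def cc (q : k) (d s : ℕ) : k := gauss k q⁻¹ s * (1 - q⁻¹ ^ (s - 1) * q ^ (d - 1))

theorem cc_ne (H : Hyp k n q) {d s : ℕ} (h0 : 0 < s) (hs : s < d) (hd : d ≤ n ^ 2) :
    cc q d s ≠ 0 := by
  refine mul_ne_zero (gauss_ne_zero H.hqi h0 (by omega)) ?_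
  have h : q ^ (d - 1) = q ^ (s - 1) * q ^ (d - s) := by rw [← pow_add]; congr 1; omega
  rw [h, ← mul_assoc, ← mul_pow, inv_mul_cancel₀ H.q0, one_pow, one_mul]
  intro h
  exact H.hq.pow_ne_one_of_pos_of_lt (by omega) (by omega : d - s < n ^ 2) (sub_eq_zero.mp h).symm

theorem cc_self (H : Hyp k n q) {d : ℕ} : cc q d d = 0 := by
  unfold cc
  rw [← mul_pow, inv_mul_cancel₀ H.q0, one_pow, sub_self, mul_zero]

theorem cc_zero {d : ℕ} : cc q d 0 = 0 := by simp [cc, gauss_zero]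

namespace IsTy

variable {d j : ℕ} {v : X}

theorem Epow (h : IsTy k n q X d j v) {s : ℕ} (hs : d ≤ s) : E k n q ^ s • v = 0 := by
  rw [show s = s - d + d by omega, pow_add, mul_smul, h.hE, smul_zero]

theorem Fv (H : Hyp k n q) (h : IsTy k n q X d j v) (s : ℕ) : F k n q • E k n q ^ s • v =
    cc q d s • E k n q ^ (s - 1) • v := by
  cases s with
  | zero => simp [cc_zero, h.hF]
  | succ s => rw [lowF H h.hF h.hg]; simp [cc]

theorem gv (H : Hyp k n q) (h : IsTy k n q X d j v) (s : ℕ) : gg k n q • E k n q ^ s • v =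
    ((q⁻¹ ^ 2) ^ s * q ^ (d - 1)) • E k n q ^ s • v := skew_smul (gE H.hn H.hq) h.hg s

theorem zv (H : Hyp k n q) (h : IsTy k n q X d j v) (s : ℕ) : zz k n q • E k n q ^ s • v =
    ((-1 : k) ^ s * (-1) ^ j) • E k n q ^ s • v := skew_smul (zE H.hn H.h4 H.hq) h.hz s

theorem exists_coeff (h : IsTy k n q X d j v) (x : X) :
    ∃ f : ℕ → k, x = ∑ s ∈ Finset.range d, f s • E k n q ^ s • v := by
  refine Submodule.span_induction ?_ ?_ ?_ ?_ (h.sp x)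
  · rintro _ ⟨s, rfl⟩
    refine ⟨fun t => if t = s then 1 else 0, ?_⟩
    by_cases hs : s < d
    · simp [ite_smul, hs]
    · simp [ite_smul, hs, h.Epow (not_lt.mp hs)]
  · exact ⟨0, by simp⟩
  · rintro _ _ _ _ ⟨f, rfl⟩ ⟨f', rfl⟩
    exact ⟨f + f', by simp [add_smul, Finset.sum_add_distrib]⟩
  · rintro a _ _ ⟨f, rfl⟩
    exact ⟨a • f, by simp [mul_smul, Finset.smul_sum]⟩

theorem linInd (h : IsTy k n q X d j v) :
    LinearIndependent k (fun s : Fin d => E k n q ^ (s : ℕ) • v) := by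
  rw [Fintype.linearIndependent_iff]
  intro g hg i
  have := nil_coeff h.hE h.hE' (fun s => if hs : s < d then g ⟨s, hs⟩ else 0) (by
    rw [Finset.sum_range]
    simpa using hg) i i.2
  simpa using this

/-- The basis `E^s v`. -/
def basis (h : IsTy k n q X d j v) : Module.Basis (Fin d) k X :=
  Module.Basis.mk h.linInd (by
    intro x _
    obtain ⟨f, rfl⟩ := h.exists_coeff x
    rw [Finset.sum_range]
    exact Submodule.sum_mem _ fun i _ => Submodule.smul_mem _ _ (Submodule.subset_span ⟨i, rfl⟩))

theorem basis_apply (h : IsTy k n q X d j v) (s : Fin d) :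
    h.basis s = E k n q ^ (s : ℕ) • v := by simp [basis]

theorem finrank_eq (h : IsTy k n q X d j v) : Module.finrank k X = d := by
  rw [Module.finrank_eq_card_basis h.basis, Fintype.card_fin]

theorem finite (h : IsTy k n q X d j v) : Module.Finite k X := Module.Finite.of_basis h.basis

theorem kerF (H : Hyp k n q) (h : IsTy k n q X d j v) {x : X} (hx : F k n q • x = 0) :
    ∃ c : k, x = c • v := by
  obtain ⟨f, rfl⟩ := h.exists_coeff x
  obtain ⟨d', rfl⟩ : ∃ d', d = d' + 1 := ⟨d - 1, by have := h.hd; omega⟩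
  refine ⟨f 0, ?_⟩
  have e : F k n q • ∑ s ∈ Finset.range (d' + 1), f s • E k n q ^ s • v
      = ∑ s ∈ Finset.range (d' + 1), (if s < d' then f (s + 1) * cc q (d' + 1) (s + 1) else 0) •
        E k n q ^ s • v := by
    rw [Finset.smul_sum, Finset.sum_range_succ', Finset.sum_range_succ]
    simp only [lt_irrefl, if_false, zero_smul, add_zero]
    rw [smul_comm, h.Fv H 0, cc_zero, zero_smul, smul_zero, add_zero]
    refine Finset.sum_congr rfl fun s hs => ?_
    rw [if_pos (Finset.mem_range.mp hs), smul_comm, h.Fv H, smul_smul]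
    simp
  rw [e] at hx
  have h0 := nil_coeff h.hE h.hE' _ hx
  rw [Finset.sum_range_succ', Finset.sum_eq_zero]
  · simp
  · intro s hs
    have hs' := Finset.mem_range.mp hs
    have := h0 s (by omega)
    rw [if_pos hs'] at this
    rw [(mul_eq_zero.mp this).resolve_right (cc_ne H (by omega) (by omega) h.hdN), zero_smul]

theorem exists_hom (H : Hyp k n q) (h : IsTy k n q X d j v) (w : Y) (hF : F k n q • w = 0)
    (hg : gg k n q • w = q ^ (d - 1) • w) (hz : zz k n q • w = (-1 : k) ^ j • w)
    (hE : E k n q ^ d • w = 0) : ∃ f : X →ₗ[U k n q] Y, f v = w := by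
  let f : X →ₗ[k] Y := h.basis.constr k (fun s => E k n q ^ (s : ℕ) • w)
  have hf : ∀ s : ℕ, f (E k n q ^ s • v) = E k n q ^ s • w := by
    intro s
    by_cases hs : s < d
    · have := h.basis.constr_basis k (fun s => E k n q ^ (s : ℕ) • w) ⟨s, hs⟩
      rwa [h.basis_apply] at this
    · rw [h.Epow (not_lt.mp hs), map_zero, show s = s - d + d by omega, pow_add, mul_smul, hE,
        smul_zero]
  have key : ∀ u : U k n q, (∀ s, f (u • E k n q ^ s • v) = u • E k n q ^ s • w) →
      ∀ x, f (u • x) = u • f x := by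
    intro u hu x
    refine Submodule.span_induction ?_ ?_ ?_ ?_ (h.sp x)
    · rintro _ ⟨s, rfl⟩
      simp only [hu, hf]
    · simp
    · intro x y _ _ hx hy; simp only [smul_add, map_add, hx, hy]
    · intro c x _ hx; simp only [smul_comm u c, map_smul, hx]
  have gw : ∀ s, gg k n q • E k n q ^ s • w = ((q⁻¹ ^ 2) ^ s * q ^ (d - 1)) • E k n q ^ s • w :=
    skew_smul (gE H.hn H.hq) hg
  have zw : ∀ s, zz k n q • E k n q ^ s • w = ((-1 : k) ^ s * (-1) ^ j) • E k n q ^ s • w :=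
    skew_smul (zE H.hn H.h4 H.hq) hz
  have hlin := map_smul_of_gens (n := n) (q := q) f
    (key _ fun s => by rw [K_eig H (h.gv H s) (h.zv H s), K_eig H (gw s) (zw s), map_smul, hf])
    (key _ fun s => by rw [Kh_eig H (h.gv H s) (h.zv H s), Kh_eig H (gw s) (zw s), map_smul, hf])
    (key _ fun s => by rw [← mul_smul, ← mul_smul, ← pow_succ', hf])
    (key _ fun s => by
      rw [h.Fv H, map_smul, hf]
      cases s with
      | zero => simp [cc_zero, hF]
      | succ s => rw [lowF H hF hg]; simp [cc])
  refine ⟨{ toFun := f, map_add' := f.map_add, map_smul' := fun u x => hlin u x }, ?_⟩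
  simpa using hf 0

end IsTy

end Low
end QFL

namespace QFL

section Idem

variable {k : Type} [Field k] {n : ℕ} {q : k}

theorem phi_eq (i : ℕ) : phi k n q i =
    ((n ^ 2 : k)⁻¹ * 2) • ∑ t ∈ Finset.range (n ^ 2 / 2), (q⁻¹ ^ (2 * i) • gg k n q) ^ t := by
  unfold phi
  congr 1
  refine Finset.sum_congr rfl fun t _ => ?_
  rw [smul_pow, ← pow_mul]; rfl

theorem gg_phi (H : Hyp k n q) (i : ℕ) : gg k n q * phi k n q i = q ^ (2 * i) • phi k n q i := by
  have h1 : (q⁻¹ ^ (2 * i) • gg k n q) ^ (n ^ 2 / 2) = 1 := by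
    rw [smul_pow, gg_ord H.hn H.h4, ← pow_mul, show 2 * i * (n ^ 2 / 2) = n ^ 2 * i by
      have := H.even
      rw [mul_comm 2, mul_assoc, Nat.mul_div_cancel' (dvd_trans (by norm_num) this), mul_comm],
      pow_mul, H.hqi.pow_eq_one, one_pow, one_smul]
  have h2 := mul_geom_sum (q⁻¹ ^ (2 * i) • gg k n q) (n ^ 2 / 2)
  rw [h1, sub_self, sub_mul, one_mul, sub_eq_zero, smul_mul_assoc] at h2
  rw [phi_eq, mul_smul_comm, smul_comm]
  congr 1
  conv_rhs => rw [← h2]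
  rw [smul_smul, ← mul_pow, mul_inv_cancel₀ H.q0, one_pow, one_smul]

theorem zz_oneJ [CharZero k] (H : Hyp k n q) {j : ℕ} (hj : j ≤ 1) :
    zz k n q * oneJ k n q j = (-1 : k) ^ j • oneJ k n q j := by
  have hz := zz_sq (k := k) (q := q) H.hn H.h4
  unfold oneJ
  change zz k n q * (if j = 0 then (2 : k)⁻¹ • (1 + zz k n q) else (2 : k)⁻¹ • (1 - zz k n q)) =
    (-1 : k) ^ j • (if j = 0 then (2 : k)⁻¹ • (1 + zz k n q) else (2 : k)⁻¹ • (1 - zz k n q))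
  interval_cases j
  · simp [mul_add, hz, add_comm]
  · simp only [one_ne_zero, if_false, mul_smul_comm, mul_sub, mul_one, hz, pow_one]
    module

theorem comm_gg_oneJ (j : ℕ) : Commute (gg k n q) (oneJ k n q j) := by
  unfold oneJ
  change Commute _ (if j = 0 then (2 : k)⁻¹ • (1 + zz k n q) else (2 : k)⁻¹ • (1 - zz k n q))
  split_ifs
  · exact ((Commute.one_right _).add_right comm_gg_zz).smul_right _
  · exact ((Commute.one_right _).sub_right comm_gg_zz).smul_right _

theorem comm_phi {x : U k n q} (h : Commute x (gg k n q)) (i : ℕ) : Commute x (phi k n q i) := by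
  unfold phi
  exact (Commute.sum_right _ _ _ fun t _ => (h.pow_right t).smul_right _).smul_right _

theorem gg_e (H : Hyp k n q) (i j : ℕ) :
    gg k n q * eIdem k n q i j = q ^ (2 * i) • eIdem k n q i j := by
  unfold eIdem
  rw [← mul_assoc, gg_phi H, smul_mul_assoc]

theorem zz_e [CharZero k] (H : Hyp k n q) (i : ℕ) {j : ℕ} (hj : j ≤ 1) :
    zz k n q * eIdem k n q i j = (-1 : k) ^ j • eIdem k n q i j := by
  unfold eIdem
  rw [← mul_assoc, (comm_phi comm_gg_zz.symm i).eq, mul_assoc, zz_oneJ H hj, mul_smul_comm]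

theorem sum_phi [CharZero k] (H : Hyp k n q) :
    ∑ i ∈ Finset.range (n ^ 2 / 2), phi k n q (i + 1) = 1 := by
  have hN : n ^ 2 / 2 * 2 = n ^ 2 := Nat.div_mul_cancel (dvd_trans (by norm_num) H.even)
  have h16 := H.N16
  have hnk : (n : k) ≠ 0 := by exact_mod_cast H.hn.ne'
  unfold phi
  rw [← Finset.smul_sum, Finset.sum_comm, Finset.sum_eq_single 0]
  · simp only [mul_zero, pow_zero, Finset.sum_const, Finset.card_range, one_smul]
    rw [← Nat.cast_smul_eq_nsmul k, smul_smul]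
    have : ((n ^ 2 : k)⁻¹ * 2 * ((n ^ 2 / 2 : ℕ) : k)) = 1 := by
      have h : ((n ^ 2 / 2 : ℕ) : k) * 2 = (n : k) ^ 2 := by exact_mod_cast hN
      rw [mul_assoc, mul_comm 2, h]
      field_simp
    rw [this, one_smul]
  · intro t ht h0
    have ht' := Finset.mem_range.mp ht
    rw [← Finset.sum_smul]
    have : ∑ i ∈ Finset.range (n ^ 2 / 2), q⁻¹ ^ (2 * (i + 1) * t) = 0 := by
      have h2 : ∀ i, q⁻¹ ^ (2 * (i + 1) * t) = q⁻¹ ^ (2 * t) * (q⁻¹ ^ (2 * t)) ^ i := by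
        intro i; rw [← pow_mul, ← pow_add]; congr 1; ring
      rw [Finset.sum_congr rfl fun i _ => h2 i, ← Finset.mul_sum]
      have h3 := geom_sum_mul (q⁻¹ ^ (2 * t)) (n ^ 2 / 2)
      rw [← pow_mul, show 2 * t * (n ^ 2 / 2) = n ^ 2 * t by
        conv_rhs => rw [← hN]
        ring, pow_mul _ (n ^ 2) t, H.hqi.pow_eq_one, one_pow, sub_self] at h3
      have h4 : q⁻¹ ^ (2 * t) - 1 ≠ 0 := by
        intro h
        exact H.hqi.pow_ne_one_of_pos_of_lt (by omega) (by omega) (sub_eq_zero.mp h)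
      rw [(mul_eq_zero.mp h3).resolve_right h4, mul_zero]
    rw [this, zero_smul]
  · intro h; exact absurd (Finset.mem_range.mpr (by omega)) h

theorem eq_zero_of_e [CharZero k] (H : Hyp k n q) {x : U k n q}
    (h : ∀ i j, j ≤ 1 → x * eIdem k n q (i + 1) j = 0) : x = 0 := by
  have h1 : ∀ i, x * phi k n q (i + 1) = 0 := by
    intro i
    have h0 := h i 0 (by norm_num)
    have h1 := h i 1 le_rfl
    unfold eIdem at h0 h1
    have : oneJ k n q 0 + oneJ k n q 1 = 1 := by
      simp only [oneJ, if_true, one_ne_zero, if_false]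
      rw [← smul_add, show ∀ a : U k n q, (1 + a + (1 - a)) = (2 : k) • 1 by
        intro a; rw [two_smul]; abel, smul_smul, inv_mul_cancel₀ two_ne_zero, one_smul]
    rw [← mul_one (phi k n q (i + 1)), ← this, mul_add, mul_add, h0, h1, add_zero]
  rw [← mul_one x, ← sum_phi H, Finset.mul_sum]
  exact Finset.sum_eq_zero fun i _ => h1 i

variable {X : Type} [AddCommGroup X] [Module k X] [Module (U k n q) X]
    [IsScalarTower k (U k n q) X]

theorem e_smul [CharZero k] (H : Hyp k n q) {i j : ℕ} (hj : j ≤ 1) {v : X}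
    (hg : gg k n q • v = q ^ (2 * i) • v) (hz : zz k n q • v = (-1 : k) ^ j • v) :
    eIdem k n q i j • v = v := by
  have hN : n ^ 2 / 2 * 2 = n ^ 2 := Nat.div_mul_cancel (dvd_trans (by norm_num) H.even)
  have hnk : (n : k) ≠ 0 := by exact_mod_cast H.hn.ne'
  have h1 : oneJ k n q j • v = v := by
    unfold oneJ
    change (if j = 0 then (2 : k)⁻¹ • (1 + zz k n q) else (2 : k)⁻¹ • (1 - zz k n q)) • v = v
    interval_cases j
    · simp only [if_true, smul_assoc, add_smul, one_smul, hz, pow_zero]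
      rw [← two_smul k v, smul_smul, inv_mul_cancel₀ two_ne_zero, one_smul]
    · simp only [one_ne_zero, if_false, smul_assoc, sub_smul, one_smul, hz, pow_one, neg_smul,
        sub_neg_eq_add]
      rw [← two_smul k v, smul_smul, inv_mul_cancel₀ two_ne_zero, one_smul]
  unfold eIdem
  rw [mul_smul, h1, phi_eq, smul_assoc, Finset.sum_smul]
  have h2 : ∀ t, (q⁻¹ ^ (2 * i) • gg k n q) ^ t • v = v := by
    intro t
    rw [smul_pow, smul_assoc, pow_smul_eig hg, smul_smul, ← mul_pow, ← mul_pow,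
      inv_mul_cancel₀ H.q0, one_pow, one_pow, one_smul]
  simp only [h2, Finset.sum_const, Finset.card_range]
  rw [← Nat.cast_smul_eq_nsmul k, smul_smul]
  have : ((n ^ 2 : k)⁻¹ * 2 * ((n ^ 2 / 2 : ℕ) : k)) = 1 := by
    have h : ((n ^ 2 / 2 : ℕ) : k) * 2 = (n : k) ^ 2 := by exact_mod_cast hN
    rw [mul_assoc, mul_comm 2, h]
    field_simp
  rw [this, one_smul]

end Idem
end QFL

namespace QFL

section Zmod

variable {k : Type} [Field k] {n : ℕ} {q : k}

variable (k n) in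
/-- The underlying space of the universal module `u ⊗_{k[G]} χ` with basis `F^a E^b`. -/
abbrev Zm := (Fin (n ^ 2) × Fin (n ^ 2)) →₀ k

variable (k n) in
/-- The basis vector `F^a E^b`, zero outside of the range. -/
def mm (a b : ℕ) : Zm k n :=
  if h : a < n ^ 2 ∧ b < n ^ 2 then Finsupp.single (⟨a, h.1⟩, ⟨b, h.2⟩) 1 else 0

theorem mm_fin (p : Fin (n ^ 2) × Fin (n ^ 2)) : mm k n p.1 p.2 = Finsupp.single p 1 := by
  simp [mm]

theorem mm_zero_left {a : ℕ} (b : ℕ) (h : n ^ 2 ≤ a) : mm k n a b = 0 := by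
  simp [mm, not_lt.mpr h]

theorem mm_zero_right (a : ℕ) {b : ℕ} (h : n ^ 2 ≤ b) : mm k n a b = 0 := by
  simp [mm, not_lt.mpr h]

theorem mm_ext {M : Type} [AddCommGroup M] [Module k M] {f g : Zm k n →ₗ[k] M}
    (h : ∀ a b, f (mm k n a b) = g (mm k n a b)) : f = g := by
  apply Finsupp.lhom_ext'
  intro p
  ext
  simpa [mm_fin] using h p.1 p.2

/-- Linear map with prescribed values on the basis. -/
def Zl {M : Type} [AddCommGroup M] [Module k M] (f : ℕ → ℕ → M) : Zm k n →ₗ[k] M :=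
  Finsupp.linearCombination k (fun p => f p.1 p.2)

theorem Zl_mm {M : Type} [AddCommGroup M] [Module k M] (f : ℕ → ℕ → M) {a b : ℕ}
    (ha : a < n ^ 2) (hb : b < n ^ 2) : Zl (k := k) (n := n) f (mm k n a b) = f a b := by
  simp [Zl, mm, ha, hb]

theorem Zl_mm' {M : Type} [AddCommGroup M] [Module k M] (f : ℕ → ℕ → M)
    (h1 : ∀ a b, n ^ 2 ≤ a → f a b = 0) (h2 : ∀ a b, n ^ 2 ≤ b → f a b = 0) (a b : ℕ) :
    Zl (k := k) (n := n) f (mm k n a b) = f a b := by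
  by_cases ha : a < n ^ 2
  · by_cases hb : b < n ^ 2
    · exact Zl_mm f ha hb
    · rw [mm_zero_right _ (not_lt.mp hb), map_zero, h2 _ _ (not_lt.mp hb)]
  · rw [mm_zero_left _ (not_lt.mp ha), map_zero, h1 _ _ (not_lt.mp ha)]

/-- weight of `K`. -/
def Wt (n : ℕ) (q x : k) (a b : ℕ) : k := x * (q ^ n) ^ b * (q ^ n)⁻¹ ^ a
/-- weight of `g`. -/
def Gt (q l : k) (a b : ℕ) : k := l * (q⁻¹ ^ 2) ^ b * (q ^ 2) ^ a
/-- coefficient in the action of `E`. -/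
def ft (q l : k) (a b : ℕ) : k := -(q * gauss k q a * (1 - q ^ (a - 1) * ((q⁻¹ ^ 2) ^ b * l)))

/-- action of `K`. -/
def ZK (n : ℕ) (q x : k) : Zm k n →ₗ[k] Zm k n := Zl fun a b => Wt n q x a b • mm k n a b
/-- action of `K̂`. -/
def ZKh (n : ℕ) (q x l : k) : Zm k n →ₗ[k] Zm k n :=
  Zl fun a b => (Wt n q x a b * Gt q l a b) • mm k n a b
/-- action of `E`. -/
def ZE (n : ℕ) (q l : k) : Zm k n →ₗ[k] Zm k n :=
  Zl fun a b => q ^ a • mm k n a (b + 1) + ft q l a b • mm k n (a - 1) b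
/-- action of `F`. -/
def ZF (k : Type) [Field k] (n : ℕ) : Zm k n →ₗ[k] Zm k n := Zl fun a b => mm k n (a + 1) b

theorem ZK_mm (x : k) (a b : ℕ) : ZK n q x (mm k n a b) = Wt n q x a b • mm k n a b :=
  Zl_mm' _ (fun a b h => by rw [mm_zero_left _ h, smul_zero])
    (fun a b h => by rw [mm_zero_right _ h, smul_zero]) a b

theorem ZKh_mm (x l : k) (a b : ℕ) :
    ZKh n q x l (mm k n a b) = (Wt n q x a b * Gt q l a b) • mm k n a b :=
  Zl_mm' _ (fun a b h => by rw [mm_zero_left _ h, smul_zero])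
    (fun a b h => by rw [mm_zero_right _ h, smul_zero]) a b

theorem ZF_mm (a b : ℕ) : ZF k n (mm k n a b) = mm k n (a + 1) b :=
  Zl_mm' _ (fun a b h => mm_zero_left _ (by omega)) (fun a b h => mm_zero_right _ (by omega)) a b

theorem ft_N (H : Hyp k n q) (l : k) (b : ℕ) : ft q l (n ^ 2) b = 0 := by
  have := H.N16
  simp [ft, gauss_prim_zero (by omega) H.hq]

theorem ft_zero (l : k) (b : ℕ) : ft q l 0 b = 0 := by simp [ft, gauss_zero]

theorem ZE_mm (H : Hyp k n q) (l : k) (a b : ℕ) : ZE n q l (mm k n a b) =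
    q ^ a • mm k n a (b + 1) + ft q l a b • mm k n (a - 1) b := by
  refine Zl_mm' _ (fun a b h => ?_) (fun a b h => ?_) a b
  · rw [mm_zero_left _ h, smul_zero, zero_add]
    rcases h.eq_or_lt with rfl | h
    · rw [ft_N H, zero_smul]
    · rw [mm_zero_left _ (by omega), smul_zero]
  · rw [mm_zero_right _ (by omega), mm_zero_right _ h, smul_zero, smul_zero, zero_add]

theorem pow_diag {M : Type} [AddCommGroup M] [Module k M] {f : M →ₗ[k] M} {c : k} {x : M}
    (h : f x = c • x) (s : ℕ) : (f ^ s) x = c ^ s • x := by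
  induction s with
  | zero => simp
  | succ s ih => rw [pow_succ, Module.End.mul_apply, h, map_smul, ih, smul_smul, pow_succ']

/-- Admissible parameters. -/
structure Par (n : ℕ) (x l : k) : Prop where
  hx : x ^ n = 1
  hl : l ^ n * x ^ 2 = 1

variable {x l : k}

theorem Wt_pow (H : Hyp k n q) (p : Par n x l) (a b : ℕ) : Wt n q x a b ^ n = 1 := by
  unfold Wt
  have : (q ^ n) ^ n = 1 := by rw [← pow_mul, ← sq, H.hq.pow_eq_one]
  rw [mul_pow, mul_pow, p.hx, pow_right_comm, this, pow_right_comm, inv_pow _ n, this]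
  simp

theorem ZK_pow (H : Hyp k n q) (p : Par n x l) : ZK n q x ^ n = 1 := by
  apply mm_ext
  intro a b
  rw [pow_diag (ZK_mm x a b), Wt_pow H p]
  simp

theorem Wt_Gt (H : Hyp k n q) (p : Par n x l) (a b : ℕ) :
    (Wt n q x a b * Gt q l a b) ^ n = ((Wt n q x a b) ^ (n - 1)) ^ 2 := by
  have hq := H.q0
  have h1 := Wt_pow H p a b
  have hW : Wt n q x a b ≠ 0 := by
    intro h; rw [h, zero_pow H.hn.ne'] at h1; exact zero_ne_one h1
  have h2 : Gt q l a b ^ n * Wt n q x a b ^ 2 = 1 := by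
    have : Gt q l a b ^ n * Wt n q x a b ^ 2 = l ^ n * x ^ 2 := by
      unfold Gt Wt
      simp only [inv_pow, mul_pow, ← pow_mul]
      field_simp
      ring
    rw [this, p.hl]
  have h3 : Wt n q x a b ^ (n - 1) * Wt n q x a b = 1 := by
    rw [← pow_succ, Nat.sub_add_cancel H.hn, h1]
  rw [mul_pow, h1, one_mul]
  refine mul_right_cancel₀ (pow_ne_zero 2 hW) ?_
  rw [h2, ← mul_pow, h3, one_pow]

theorem ZKh_pow (H : Hyp k n q) (p : Par n x l) : ZKh n q x l ^ n = (ZK n q x ^ (n - 1)) ^ 2 := by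
  apply mm_ext
  intro a b
  rw [pow_diag (ZKh_mm x l a b), pow_diag (pow_diag (ZK_mm x a b) _), Wt_Gt H p]

theorem ZKKh : ZK n q x * ZKh n q x l = ZKh n q x l * ZK n q x := by
  apply mm_ext
  intro a b
  simp only [Module.End.mul_apply, ZK_mm, ZKh_mm, map_smul]
  rw [smul_comm]

theorem Wt_b (x : k) (a b : ℕ) : Wt n q x a (b + 1) = q ^ n * Wt n q x a b := by
  unfold Wt; ring
theorem Wt_a (H : Hyp k n q) (x : k) (a b : ℕ) : Wt n q x a b = q ^ n * Wt n q x (a + 1) b := by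
  have := H.q0
  unfold Wt; simp only [inv_pow, ← pow_mul]; field_simp; ring
theorem Gt_b (H : Hyp k n q) (x : k) (a b : ℕ) : Gt q x a (b + 1) = (q ^ 2)⁻¹ * Gt q x a b := by
  have := H.q0
  unfold Gt; simp only [inv_pow, ← pow_mul]; field_simp; ring
theorem Gt_a (H : Hyp k n q) (x : k) (a b : ℕ) : Gt q x a b = (q ^ 2)⁻¹ * Gt q x (a + 1) b := by
  have := H.q0
  unfold Gt; simp only [inv_pow, ← pow_mul]; field_simp; ring

theorem ZKE (H : Hyp k n q) : ZK n q x * ZE n q l = q ^ n • (ZE n q l * ZK n q x) := by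
  apply mm_ext
  intro a b
  simp only [Module.End.mul_apply, LinearMap.smul_apply, ZK_mm, ZE_mm H, map_smul, map_add, Wt_b]
  cases a with
  | zero => simp only [ft_zero]; module
  | succ a => simp only [Nat.add_sub_cancel, Wt_a H x a b]; module

theorem ZKhE (H : Hyp k n q) :
    ZKh n q x l * ZE n q l = (q ^ n * (q ^ 2)⁻¹) • (ZE n q l * ZKh n q x l) := by
  apply mm_ext
  intro a b
  simp only [Module.End.mul_apply, LinearMap.smul_apply, ZKh_mm, ZE_mm H, map_smul, map_add, Wt_b,
    Gt_b H]
  cases a with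
  | zero => simp only [ft_zero]; module
  | succ a => simp only [Nat.add_sub_cancel, Wt_a H x a b, Gt_a H l a b]; module

theorem ZKF (H : Hyp k n q) : ZK n q x * ZF k n = (q ^ n)⁻¹ • (ZF k n * ZK n q x) := by
  have := H.q0
  apply mm_ext
  intro a b
  simp only [Module.End.mul_apply, LinearMap.smul_apply, ZK_mm, ZF_mm, map_smul, Wt_a H x a b,
    smul_smul]
  congr 1
  field_simp

theorem ZKhF (H : Hyp k n q) :
    ZKh n q x l * ZF k n = ((q ^ n)⁻¹ * q ^ 2) • (ZF k n * ZKh n q x l) := by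
  have := H.q0
  apply mm_ext
  intro a b
  simp only [Module.End.mul_apply, LinearMap.smul_apply, ZKh_mm, ZF_mm, map_smul, Wt_a H x a b,
    Gt_a H l a b, smul_smul]
  congr 1
  field_simp

theorem Zg_mm (H : Hyp k n q) (p : Par n x l) (a b : ℕ) :
    (ZK n q x ^ (n - 1) * ZKh n q x l) (mm k n a b) = Gt q l a b • mm k n a b := by
  rw [Module.End.mul_apply, ZKh_mm, map_smul, pow_diag (ZK_mm x a b), smul_smul, mul_comm,
    ← mul_assoc, ← pow_succ, Nat.sub_add_cancel H.hn, Wt_pow H p, one_mul]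

theorem ZEF (H : Hyp k n q) (p : Par n x l) :
    ZF k n * ZE n q l = q⁻¹ • (ZE n q l * ZF k n) + (1 - ZK n q x ^ (n - 1) * ZKh n q x l) := by
  have hq := H.q0
  apply mm_ext
  intro a b
  rw [LinearMap.add_apply, LinearMap.sub_apply, Zg_mm H p]
  simp only [Module.End.mul_apply, LinearMap.smul_apply, ZF_mm, ZE_mm H, map_smul, map_add,
    Module.End.one_apply, Nat.add_sub_cancel]
  have key : ft q l a b = q⁻¹ * ft q l (a + 1) b + (1 - Gt q l a b) := by
    unfold ft Gt
    cases a with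
    | zero => simp [gauss_zero, gauss_succ]; field_simp; ring
    | succ a =>
      have h1 := gauss_succ q (a + 1)
      have h2 := gauss_succ' q (a + 1)
      simp only [Nat.add_sub_cancel]
      generalize hG : gauss k q (a + 1 + 1) = G at *
      have h3 : q⁻¹ * -(q * G * (1 - q ^ (a + 1) * ((q⁻¹ ^ 2) ^ b * l))) =
        -(G * (1 - q ^ (a + 1) * ((q⁻¹ ^ 2) ^ b * l))) := by field_simp
      rw [h3]
      linear_combination h2 - q ^ (a + 1) * ((q⁻¹ ^ 2) ^ b * l) * h1
  cases a with
  | zero =>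
    have key' := key
    rw [ft_zero] at key'
    rw [ft_zero, zero_smul, add_zero, smul_add, smul_smul, smul_smul]
    have h0 : q⁻¹ * q ^ (0 + 1) = q ^ 0 := by simp [hq]
    linear_combination (norm := module) (-h0) • mm k n 1 (b + 1) + key' • mm k n 0 b
  | succ a =>
    have h0 : q⁻¹ * q ^ (a + 1 + 1) = q ^ (a + 1) := by
      rw [pow_succ' q (a + 1), ← mul_assoc, inv_mul_cancel₀ hq, one_mul]
    simp only [Nat.add_sub_cancel]
    linear_combination (norm := module) (-h0) • mm k n (a + 2) (b + 1) + key • mm k n (a + 1) b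

theorem ZF_pow_mm (s a b : ℕ) : (ZF k n ^ s) (mm k n a b) = mm k n (a + s) b := by
  induction s with
  | zero => simp
  | succ s ih => rw [pow_succ' (ZF k n) s, Module.End.mul_apply, ih, ZF_mm]; rfl

theorem ZE_pow_mm (H : Hyp k n q) (s b : ℕ) :
    (ZE n q l ^ s) (mm k n 0 b) = mm k n 0 (b + s) := by
  induction s with
  | zero => simp
  | succ s ih =>
    rw [pow_succ' (ZE n q l) s, Module.End.mul_apply, ih, ZE_mm H, ft_zero]
    simp [add_assoc]

theorem ZF_nil : ZF k n ^ n ^ 2 = 0 := by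
  apply mm_ext
  intro a b
  rw [ZF_pow_mm, mm_zero_left _ (by omega), LinearMap.zero_apply]

theorem ZgE (H : Hyp k n q) (p : Par n x l) : (ZK n q x ^ (n - 1) * ZKh n q x l) * ZE n q l =
    q⁻¹ ^ 2 • (ZE n q l * (ZK n q x ^ (n - 1) * ZKh n q x l)) := by
  apply mm_ext
  intro a b
  rw [Module.End.mul_apply, LinearMap.smul_apply, Module.End.mul_apply (ZE n q l), Zg_mm H p]
  simp only [ZE_mm H, map_smul, map_add, Zg_mm H p, Gt_b H]
  cases a with
  | zero => simp only [ft_zero]; module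
  | succ a => simp only [Nat.add_sub_cancel, Gt_a H l a b]; module

theorem ZE_nil (H : Hyp k n q) (p : Par n x l) : ZE n q l ^ n ^ 2 = 0 := by
  have h16 := H.N16
  have hc : Commute (ZF k n) (ZE n q l ^ n ^ 2) := by
    have := FE_pow (A := Module.End k (Zm k n)) (k := k) (ZEF H p) (ZgE H p) (n ^ 2 - 1)
    rw [Nat.sub_add_cancel (by omega), gauss_prim_zero (by omega) H.hqi, zero_smul, add_zero,
      H.hqi.pow_eq_one, one_smul] at this
    exact this
  apply mm_ext
  intro a b
  have h1 := ZF_pow_mm (k := k) (n := n) a 0 b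
  rw [zero_add] at h1
  rw [← h1, ← Module.End.mul_apply, ← (hc.pow_left a).eq, Module.End.mul_apply, ZE_pow_mm H,
    mm_zero_right _ (by omega)]
  simp

/-- The action on generators. -/
def Zgen (n : ℕ) (q x l : k) : Fin 4 → (Zm k n →ₗ[k] Zm k n) :=
  ![ZK n q x, ZKh n q x l, ZE n q l, ZF k n]

theorem Zgen_rel (H : Hyp k n q) (p : Par n x l) ⦃a b : FreeAlgebra k (Fin 4)⦄
    (h : Rel k n q a b) : FreeAlgebra.lift k (Zgen n q x l) a =
      FreeAlgebra.lift k (Zgen n q x l) b := by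
  have i0 : FreeAlgebra.lift k (Zgen n q x l) (FreeAlgebra.ι k 0) = ZK n q x :=
    FreeAlgebra.lift_ι_apply _ _
  have i1 : FreeAlgebra.lift k (Zgen n q x l) (FreeAlgebra.ι k 1) = ZKh n q x l :=
    FreeAlgebra.lift_ι_apply _ _
  have i2 : FreeAlgebra.lift k (Zgen n q x l) (FreeAlgebra.ι k 2) = ZE n q l :=
    FreeAlgebra.lift_ι_apply _ _
  have i3 : FreeAlgebra.lift k (Zgen n q x l) (FreeAlgebra.ι k 3) = ZF k n :=
    FreeAlgebra.lift_ι_apply _ _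
  have hK : ZK n q x * ZK n q x ^ (n - 1) = 1 := by
    rw [← pow_succ', Nat.sub_add_cancel H.hn, ZK_pow H p]
  have hKh : ZKh n q x l * ZKh n q x l ^ (n ^ 2 - 1) = 1 := by
    rw [← pow_succ', Nat.sub_add_cancel (pow_pos H.hn 2), show ZKh n q x l ^ n ^ 2 = (ZKh n q x l ^ n) ^ n by
      rw [← pow_mul (ZKh n q x l) n n, ← sq n], ZKh_pow H p, ← pow_mul,
      ← pow_mul, show (n - 1) * (2 * n) = n * ((n - 1) * 2) by ring, pow_mul, ZK_pow H p, one_pow]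
  cases h <;> simp only [map_mul, map_pow, map_smul, map_sub, map_one, map_zero, i0, i1, i2, i3]
  · exact ZK_pow H p
  · exact ZKh_pow H p
  · exact ZKKh
  · rw [ZKE H, smul_mul_assoc, mul_assoc, hK, mul_one]
  · rw [ZKF H, smul_mul_assoc, mul_assoc, hK, mul_one]
  · rw [ZKhE H, smul_mul_assoc, mul_assoc, hKh, mul_one]
  · rw [ZKhF H, smul_mul_assoc, mul_assoc, hKh, mul_one]
  · exact ZE_nil H p
  · exact ZF_nil
  · rw [ZEF H p]; abel

/-- The representation. -/
def rho (H : Hyp k n q) (p : Par n x l) : U k n q →ₐ[k] Module.End k (Zm k n) :=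
  RingQuot.liftAlgHom k ⟨FreeAlgebra.lift k (Zgen n q x l), Zgen_rel H p⟩

theorem rho_K (H : Hyp k n q) (p : Par n x l) : rho H p (K k n q) = ZK n q x := by
  unfold rho K
  rw [RingQuot.liftAlgHom_mkAlgHom_apply]
  exact FreeAlgebra.lift_ι_apply _ _
theorem rho_Kh (H : Hyp k n q) (p : Par n x l) : rho H p (Kh k n q) = ZKh n q x l := by
  unfold rho Kh
  rw [RingQuot.liftAlgHom_mkAlgHom_apply]
  exact FreeAlgebra.lift_ι_apply _ _
theorem rho_E (H : Hyp k n q) (p : Par n x l) : rho H p (E k n q) = ZE n q l := by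
  unfold rho E
  rw [RingQuot.liftAlgHom_mkAlgHom_apply]
  exact FreeAlgebra.lift_ι_apply _ _
theorem rho_F (H : Hyp k n q) (p : Par n x l) : rho H p (F k n q) = ZF k n := by
  unfold rho F
  rw [RingQuot.liftAlgHom_mkAlgHom_apply]
  exact FreeAlgebra.lift_ι_apply _ _

end Zmod
end QFL

namespace QFL

section Gam

variable {k : Type} [Field k] {n : ℕ} {q : k}

theorem par (H : Hyp k n q) (i j : ℕ) :
    Par n ((q ^ (2 * i)) ^ (n ^ 2 / 4 - n / 2) * (-1 : k) ^ j) (q ^ (2 * i)) := by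
  obtain ⟨m, hm⟩ := H.h4
  have e0 : n ^ 2 / 4 - n / 2 + 2 * m = 4 * m * m := by
    have e1 : n ^ 2 / 4 = 4 * m * m := by
      rw [hm, show (4*m)^2 = 4 * m * m * 4 by ring]; simp
    have e2 : n / 2 = 2 * m := by omega
    have : 2 * m ≤ 4 * m * m := by nlinarith [Nat.le_mul_self m]
    omega
  generalize n ^ 2 / 4 - n / 2 = M at *
  have e3 : q ^ (n ^ 2) = 1 := H.hq.pow_eq_one
  have hsq : ((-1 : k) ^ j) ^ 2 = 1 := by rw [← pow_mul, mul_comm, pow_mul]; simp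
  have h2 : (q ^ (2 * i)) ^ n * ((q ^ (2 * i)) ^ M * (-1 : k) ^ j) ^ 2 = 1 := by
    rw [mul_pow, hsq, mul_one, ← pow_mul, ← pow_mul, ← pow_mul, ← pow_add,
      show 2 * i * n + 2 * i * (M * 2) = 4 * i * (M + 2 * m) by rw [hm]; ring, e0,
      show 4 * i * (4 * m * m) = n ^ 2 * i by rw [hm]; ring, pow_mul, e3, one_pow]
  refine ⟨?_, h2⟩
  have h5 : (q ^ (2 * i)) ^ (n * (2 * m)) = 1 := by
    rw [← pow_mul, show 2 * i * (n * (2 * m)) = n ^ 2 * i by rw [hm]; ring, pow_mul, e3, one_pow]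
  have h6 := congrArg (fun t => t ^ (2 * m)) h2
  simp only [mul_pow _ _ (2 * m), one_pow] at h6
  rw [← pow_mul _ n, h5, one_mul, ← pow_mul, show 2 * (2 * m) = n by omega] at h6
  exact h6

theorem rho_pow_F (H : Hyp k n q) {x l : k} (p : Par n x l) (s a b : ℕ) :
    rho H p (F k n q ^ s) (mm k n a b) = mm k n (a + s) b := by
  rw [map_pow, rho_F, ZF_pow_mm]

theorem rho_e [CharZero k] (H : Hyp k n q) {i j : ℕ} (hj : j ≤ 1) :
    rho H (par H i j) (eIdem k n q i j) (mm k n 0 0) = mm k n 0 0 := by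
  letI : Module (U k n q) (Zm k n) := Module.compHom _ (rho H (par H i j)).toRingHom
  haveI : IsScalarTower k (U k n q) (Zm k n) :=
    ⟨fun c u z => by
      change rho H (par H i j) (c • u) z = c • rho H (par H i j) u z
      rw [map_smul]; rfl⟩
  have hg : gg k n q • mm k n 0 0 = q ^ (2 * i) • mm k n 0 0 := by
    change rho H (par H i j) (K k n q ^ (n - 1) * Kh k n q) (mm k n 0 0) = _
    rw [map_mul, map_pow, rho_K, rho_Kh, Zg_mm H (par H i j)]
    simp [Gt]
  have hK : K k n q • mm k n 0 0 =
      ((q ^ (2 * i)) ^ (n ^ 2 / 4 - n / 2) * (-1 : k) ^ j) • mm k n 0 0 := by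
    change rho H (par H i j) (K k n q) (mm k n 0 0) = _
    rw [rho_K, ZK_mm]
    simp [Wt]
  have hz : zz k n q • mm k n 0 0 = (-1 : k) ^ j • mm k n 0 0 := by
    have h1 : zz k n q * K k n q = gg k n q ^ (n ^ 2 / 4 - n / 2) := by
      rw [K_eq H.hn H.h4, ← mul_assoc, zz_sq H.hn H.h4, one_mul]
    have h2 : (zz k n q * K k n q) • mm k n 0 0 = (q ^ (2 * i)) ^ (n ^ 2 / 4 - n / 2) • mm k n 0 0 := by
      rw [h1, pow_smul_eig hg]
    rw [mul_smul, hK, smul_comm] at h2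
    have h3 : (q ^ (2 * i)) ^ (n ^ 2 / 4 - n / 2) ≠ 0 := pow_ne_zero _ (pow_ne_zero _ H.q0)
    rw [mul_smul] at h2
    have h4 := smul_right_injective _ h3 h2
    have h5 := congrArg (fun t => (-1 : k) ^ j • t) h4
    simp only [smul_smul, ← pow_add] at h5
    rwa [Even.neg_one_pow ⟨j, rfl⟩, one_smul] at h5
  exact e_smul H hj hg hz

theorem rho_FEe [CharZero k] (H : Hyp k n q) {i j : ℕ} (hj : j ≤ 1) (a b : ℕ) :
    rho H (par H i j) (F k n q ^ a * (E k n q ^ b * eIdem k n q i j)) (mm k n 0 0) = mm k n a b := by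
  rw [map_mul, map_mul, Module.End.mul_apply, Module.End.mul_apply, rho_e H hj, map_pow (rho H _) (E k n q),
    rho_E, ZE_pow_mm H, rho_pow_F]
  simp

theorem gEe (H : Hyp k n q) (i j b : ℕ) : gg k n q • (E k n q ^ b • eIdem k n q i j) =
    ((q⁻¹ ^ 2) ^ b * q ^ (2 * i)) • E k n q ^ b • eIdem k n q i j :=
  skew_smul (X := U k n q) (v := eIdem k n q i j) (gE H.hn H.hq) (gg_e H i j) b

theorem zEe [CharZero k] (H : Hyp k n q) (i : ℕ) {j : ℕ} (hj : j ≤ 1) (b : ℕ) :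
    zz k n q • (E k n q ^ b • eIdem k n q i j) =
    ((-1 : k) ^ b * (-1) ^ j) • E k n q ^ b • eIdem k n q i j :=
  skew_smul (X := U k n q) (v := eIdem k n q i j) (zE H.hn H.h4 H.hq) (zz_e H i hj) b

theorem pbw_e [CharZero k] (H : Hyp k n q) {i j : ℕ} (hj : j ≤ 1) {x : U k n q}
    (hx : x ∈ pbw k n q) :
    x * eIdem k n q i j ∈ Submodule.span k {y | ∃ a b : ℕ, a ≤ n ^ 2 - 2 ∧ b ≤ n ^ 2 - 1 ∧
      y = F k n q ^ a * (E k n q ^ b * eIdem k n q i j)} := by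
  unfold pbw at hx
  refine Submodule.span_induction ?_ ?_ ?_ ?_ hx
  · rintro _ ⟨a, b, c, d, ha, hb, -, -, rfl⟩
    have h1 := pow_smul_eig (X := U k n q) (K_eig (X := U k n q) H (gEe H i j b) (zEe H i hj b)) c
    have h2 := pow_smul_eig (X := U k n q) (Kh_eig (X := U k n q) H (gEe H i j b) (zEe H i hj b)) d
    have : F k n q ^ a * K k n q ^ c * Kh k n q ^ d * E k n q ^ b * eIdem k n q i j =
      F k n q ^ a * (K k n q ^ c • (Kh k n q ^ d • (E k n q ^ b • eIdem k n q i j))) := by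
      simp only [smul_eq_mul, mul_assoc]
    rw [this, h2, smul_comm, h1, smul_smul, mul_smul_comm]
    exact Submodule.smul_mem _ _ (Submodule.subset_span ⟨a, b, ha, hb, rfl⟩)
  · simp
  · intro x y _ _ hx hy; rw [add_mul]; exact Submodule.add_mem _ hx hy
  · intro c x _ hx; rw [smul_mul_assoc]; exact Submodule.smul_mem _ _ hx

theorem pbw_inj [CharZero k] (H : Hyp k n q) {x : U k n q} (hx : x ∈ pbw k n q)
    (hF : F k n q * x = 0) : x = 0 := by
  have h16 := H.N16
  apply eq_zero_of_e H
  intro i j hj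
  generalize i + 1 = i
  let f : Zm k n →ₗ[k] U k n q :=
    Zl fun a b => F k n q ^ (a - 1) * (E k n q ^ b * eIdem k n q i j)
  have key : ∀ y ∈ Submodule.span k {y | ∃ a b : ℕ, a ≤ n ^ 2 - 2 ∧ b ≤ n ^ 2 - 1 ∧
      y = F k n q ^ a * (E k n q ^ b * eIdem k n q i j)},
      f (rho H (par H i j) (F k n q * y) (mm k n 0 0)) = y := by
    intro y hy
    refine Submodule.span_induction ?_ ?_ ?_ ?_ hy
    · rintro _ ⟨a, b, ha, hb, rfl⟩
      rw [← mul_assoc, ← pow_succ', rho_FEe H hj, Zl_mm _ (by omega) (by omega)]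
      rfl
    · simp
    · intro x y _ _ hx hy
      rw [mul_add, map_add, LinearMap.add_apply, map_add, hx, hy]
    · intro c x _ hx
      rw [mul_smul_comm, map_smul, LinearMap.smul_apply, map_smul, hx]
  have := key _ (pbw_e (i := i) H hj hx)
  rw [← mul_assoc, hF, zero_mul] at this
  simpa using this.symm

theorem mm_apply (a b : ℕ) (p : Fin (n ^ 2) × Fin (n ^ 2)) :
    mm k n a b p = if a = p.1 ∧ b = p.2 then 1 else 0 := by
  unfold mm
  split_ifs with h1 h2 h2
  · rw [Finsupp.single_apply, if_pos]
    ext <;> simp [h2.1, h2.2]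
  · rw [Finsupp.single_apply, if_neg]
    rintro rfl; simp at h2
  · exact absurd ⟨by rw [h2.1]; exact p.1.2, by rw [h2.2]; exact p.2.2⟩ h1
  · rfl

theorem ZE_coord (H : Hyp k n q) (l : k) (h : n ^ 2 - 1 < n ^ 2) (b : ℕ) (hb : b + 1 < n ^ 2) (z : Zm k n) :
    (ZE n q l z) (⟨n ^ 2 - 1, h⟩, ⟨b + 1, hb⟩) =
      q ^ (n ^ 2 - 1) * z (⟨n ^ 2 - 1, h⟩, ⟨b, by omega⟩) := by
  have h16 := H.N16
  have : (Finsupp.lapply (⟨n ^ 2 - 1, h⟩, ⟨b + 1, hb⟩)) ∘ₗ ZE n q l =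
      q ^ (n ^ 2 - 1) • (Finsupp.lapply (R := k) (M := k) ((⟨n ^ 2 - 1, h⟩, ⟨b, by omega⟩) : Fin (n ^ 2) × Fin (n ^ 2))) := by
    apply mm_ext
    intro a' b'
    rw [LinearMap.comp_apply, ZE_mm H]
    simp only [LinearMap.smul_apply, Finsupp.lapply_apply, Finsupp.add_apply, Finsupp.smul_apply,
      mm_apply, smul_eq_mul]
    by_cases hN : a' = n ^ 2
    · subst hN
      have : n ^ 2 ≠ n ^ 2 - 1 := by omega
      rw [ft_N H]; simp [this]
    · rw [if_neg (by omega : ¬ (a' - 1 = n ^ 2 - 1 ∧ b' = b + 1))]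
      by_cases h1 : a' = n ^ 2 - 1 ∧ b' = b
      · rw [if_pos (by omega), if_pos h1, h1.1]; simp
      · rw [if_neg (by omega), if_neg h1]; simp
  exact LinearMap.congr_fun this z

theorem E_alpha_ne [CharZero k] (H : Hyp k n q) {i j : ℕ} (hj : j ≤ 1) :
    E k n q ^ (n ^ 2 - 1) • alpha k n q i j ≠ 0 := by
  have h16 := H.N16
  intro h0
  have h1 := rho_FEe (i := i) H hj (n ^ 2 - 1) 0
  rw [pow_zero, one_mul] at h1
  have h2 : rho H (par H i j) (E k n q ^ (n ^ 2 - 1) • alpha k n q i j) (mm k n 0 0) =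
      (ZE n q (q ^ (2 * i)) ^ (n ^ 2 - 1)) (mm k n (n ^ 2 - 1) 0) := by
    rw [smul_eq_mul, alpha, map_mul, Module.End.mul_apply, h1, map_pow, rho_E]
  rw [h0, map_zero, LinearMap.zero_apply] at h2
  have h3 : ∀ s (hs : s < n ^ 2), ((ZE n q (q ^ (2 * i)) ^ s) (mm k n (n ^ 2 - 1) 0))
      (⟨n ^ 2 - 1, by omega⟩, ⟨s, hs⟩) ≠ 0 := by
    intro s
    induction s with
    | zero => intro hs; simp [mm_apply]
    | succ s ih =>
      intro hs
      rw [pow_succ' (ZE n q (q ^ (2 * i))) s, Module.End.mul_apply, ZE_coord H]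
      exact mul_ne_zero (pow_ne_zero _ H.q0) (ih (by omega))
  apply h3 (n ^ 2 - 1) (by omega)
  rw [← h2]
  rfl

end Gam
end QFL

namespace QFL

section GamB

variable {k : Type} [Field k] {n : ℕ} {q : k}

theorem pbw_mono (H : Hyp k n q) {a : ℕ} (ha : a ≤ n ^ 2 - 2) (b c d : ℕ) :
    F k n q ^ a * K k n q ^ c * Kh k n q ^ d * E k n q ^ b ∈ pbw k n q := by
  have h16 := H.N16
  by_cases hb : b < n ^ 2
  · have hc : K k n q ^ c = K k n q ^ (c % n) := by
      conv_lhs => rw [← Nat.mod_add_div c n, pow_add, pow_mul, K_pow_n, one_pow, mul_one]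
    have hd : Kh k n q ^ d = Kh k n q ^ (d % n ^ 2) := by
      conv_lhs => rw [← Nat.mod_add_div d (n ^ 2), pow_add, pow_mul, Kh_pow_N, one_pow, mul_one]
    rw [hc, hd]
    have := Nat.mod_lt c H.hn
    have := Nat.mod_lt d (by omega : n ^ 2 > 0)
    exact Submodule.subset_span ⟨a, b, c % n, d % n ^ 2, ha, by omega, by omega, by omega, rfl⟩
  · rw [E_nil' (not_lt.mp hb), mul_zero]; exact Submodule.zero_mem _

theorem skew_back {A : Type} [Ring A] [Algebra k A] {c : k} {x y : A} (hc : c ≠ 0)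
    (h : x * y = c • (y * x)) (s : ℕ) : y ^ s * x = (c ^ s)⁻¹ • (x * y ^ s) := by
  rw [skew_pow h, smul_smul, inv_mul_cancel₀ (pow_ne_zero _ hc), one_smul]

theorem pbw_mul_of (H : Hyp k n q) {u : U k n q}
    (h : ∀ a b c d : ℕ, a ≤ n ^ 2 - 2 →
      F k n q ^ a * K k n q ^ c * Kh k n q ^ d * E k n q ^ b * u ∈ pbw k n q)
    {x : U k n q} (hx : x ∈ pbw k n q) : x * u ∈ pbw k n q := by
  have hx' := hx
  unfold pbw at hx'
  refine Submodule.span_induction ?_ ?_ ?_ ?_ hx'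
  · rintro _ ⟨a, b, c, d, ha, hb, -, -, rfl⟩
    exact h a b c d ha
  · simp
  · intro x y _ _ hx hy; rw [add_mul]; exact Submodule.add_mem _ hx hy
  · intro c x _ hx; rw [smul_mul_assoc]; exact Submodule.smul_mem _ _ hx

variable (k n q) in
/-- Elements whose right multiplication preserves the PBW span. -/
def rightSt : Subalgebra k (U k n q) where
  carrier := {u | ∀ x ∈ pbw k n q, x * u ∈ pbw k n q}
  mul_mem' := by
    intro a b ha hb x hx
    rw [← mul_assoc]; exact hb _ (ha _ hx)
  add_mem' := by
    intro a b ha hb x hx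
    rw [mul_add]; exact Submodule.add_mem _ (ha _ hx) (hb _ hx)
  algebraMap_mem' := by
    intro c x hx
    rw [← Algebra.commutes, ← Algebra.smul_def]
    exact Submodule.smul_mem _ _ hx

theorem K_rightSt (H : Hyp k n q) : K k n q ∈ rightSt k n q := by
  intro x hx
  refine pbw_mul_of H ?_ hx
  intro a b c d ha
  rw [mul_assoc, skew_back (pow_ne_zero _ H.q0) (KE H.hn), mul_smul_comm]
  refine Submodule.smul_mem _ _ ?_
  have : F k n q ^ a * K k n q ^ c * Kh k n q ^ d * (K k n q * E k n q ^ b) =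
      F k n q ^ a * K k n q ^ (c + 1) * Kh k n q ^ d * E k n q ^ b := by
    have h := (comm_K_Kh (k := k) (n := n) (q := q)).pow_right d
    rw [← mul_assoc, mul_assoc _ (Kh k n q ^ d) (K k n q), ← h.eq, ← mul_assoc, pow_succ, ← mul_assoc (F k n q ^ a)]
  rw [this]
  exact pbw_mono H ha _ _ _

theorem Kh_rightSt (H : Hyp k n q) : Kh k n q ∈ rightSt k n q := by
  intro x hx
  refine pbw_mul_of H ?_ hx
  intro a b c d ha
  rw [mul_assoc, skew_back (mul_ne_zero (pow_ne_zero _ H.q0) (inv_ne_zero (pow_ne_zero _ H.q0)))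
    (KhE H.hn), mul_smul_comm]
  refine Submodule.smul_mem _ _ ?_
  rw [← mul_assoc, mul_assoc _ (Kh k n q ^ d) (Kh k n q), ← pow_succ]
  exact pbw_mono H ha _ _ _

theorem e_rightSt (H : Hyp k n q) (i j : ℕ) : eIdem k n q i j ∈ rightSt k n q := by
  have hK := K_rightSt H
  have hKh := Kh_rightSt H
  unfold eIdem
  refine mul_mem ?_ ?_
  · unfold phi
    refine Subalgebra.smul_mem _ (sum_mem fun t _ => Subalgebra.smul_mem _ (pow_mem (mul_mem (pow_mem hK _) hKh) _) _) _
  · unfold oneJ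
    split_ifs
    · exact Subalgebra.smul_mem _ (add_mem (one_mem _) (mul_mem hK (pow_mem hKh _))) _
    · exact Subalgebra.smul_mem _ (sub_mem (one_mem _) (mul_mem hK (pow_mem hKh _))) _

theorem FEe_pbw (H : Hyp k n q) {a : ℕ} (ha : a ≤ n ^ 2 - 2) (b i j : ℕ) :
    F k n q ^ a * (E k n q ^ b * eIdem k n q i j) ∈ pbw k n q := by
  rw [← mul_assoc]
  refine e_rightSt H i j _ ?_
  simpa using pbw_mono H ha b 0 0

theorem EsF (H : Hyp k n q) (i j s : ℕ) (hs : s ≤ n ^ 2 - 2) :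
    E k n q ^ s * (F k n q ^ (n ^ 2 - 1) * eIdem k n q i j) ∈
    Submodule.span k {y | ∃ m ≤ s, y = F k n q ^ (n ^ 2 - 1 - m) * (E k n q ^ (s - m) * eIdem k n q i j)} := by
  have h16 := H.N16
  induction s with
  | zero => exact Submodule.subset_span ⟨0, le_rfl, by simp⟩
  | succ s ih =>
    rw [pow_succ' (E k n q) s, mul_assoc]
    refine Submodule.span_induction (p := fun x _ => E k n q * x ∈ Submodule.span k {y | ∃ m ≤ s + 1, y = F k n q ^ (n ^ 2 - 1 - m) * (E k n q ^ (s + 1 - m) * eIdem k n q i j)}) ?_ ?_ ?_ ?_ (ih (by omega))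
    · rintro _ ⟨m, hm, rfl⟩
      obtain ⟨a, ha⟩ : ∃ a, n ^ 2 - 1 - m = a + 1 := ⟨n ^ 2 - 1 - m - 1, by omega⟩
      have hg := gEe H i j (s - m)
      simp only [smul_eq_mul] at hg
      rw [ha, ← mul_assoc, EF_pow H.q0 EFrel (gF H.hn H.hq)]
      simp only [sub_mul, smul_mul_assoc, smul_sub, mul_assoc, hg, mul_smul_comm, smul_smul]
      have m1 : F k n q ^ (a + 1) * (E k n q * (E k n q ^ (s - m) * eIdem k n q i j)) ∈
        Submodule.span k {y | ∃ m ≤ s + 1, y = F k n q ^ (n ^ 2 - 1 - m) * (E k n q ^ (s + 1 - m) * eIdem k n q i j)} :=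
        Submodule.subset_span ⟨m, by omega, by
          rw [ha, ← mul_assoc (E k n q), ← pow_succ', show s - m + 1 = s + 1 - m by omega]⟩
      have m2 : F k n q ^ a * (E k n q ^ (s - m) * eIdem k n q i j) ∈
        Submodule.span k {y | ∃ m ≤ s + 1, y = F k n q ^ (n ^ 2 - 1 - m) * (E k n q ^ (s + 1 - m) * eIdem k n q i j)} :=
        Submodule.subset_span ⟨m + 1, by omega, by
          rw [show n ^ 2 - 1 - (m + 1) = a by omega, show s + 1 - (m + 1) = s - m by omega]⟩
      refine Submodule.sub_mem _ (Submodule.smul_mem _ _ m1) (Submodule.sub_mem _ (Submodule.smul_mem _ _ m2) (Submodule.smul_mem _ _ m2))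
    · simp
    · intro x y _ _ hx hy; rw [mul_add]; exact Submodule.add_mem _ hx hy
    · intro c x _ hx; rw [mul_smul_comm]; exact Submodule.smul_mem _ _ hx

theorem exists_gam [CharZero k] (H : Hyp k n q) {i j : ℕ} (hi : 1 ≤ i) (hi' : i ≤ n ^ 2 / 2) (hj : j ≤ 1) :
    ∃ y ∈ pbw k n q, F k n q * y = beta k n q i j ∧
      gg k n q * y = q ^ (n ^ 2 - 2 * i) • y ∧ zz k n q * y = (-1 : k) ^ j • y := by
  have h16 := H.N16
  have h0 := EsF H i j (2 * i - 2) (by omega)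
  change beta k n q i j ∈ _ at h0
  refine Submodule.span_induction (p := fun x _ => ∃ y ∈ pbw k n q, F k n q * y = x ∧
      gg k n q * y = q ^ (n ^ 2 - 2 * i) • y ∧ zz k n q * y = (-1 : k) ^ j • y) ?_ ?_ ?_ ?_ h0
  · rintro _ ⟨m, hm, rfl⟩
    refine ⟨F k n q ^ (n ^ 2 - 2 - m) * (E k n q ^ (2 * i - 2 - m) * eIdem k n q i j),
      FEe_pbw H (by omega) _ _ _, ?_, ?_, ?_⟩
    · rw [← mul_assoc, ← pow_succ', show n ^ 2 - 2 - m + 1 = n ^ 2 - 1 - m by omega]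
    · have := skew_smul (X := U k n q) (gF H.hn H.hq) (gEe H i j (2 * i - 2 - m)) (n ^ 2 - 2 - m)
      simp only [smul_eq_mul] at this
      rw [this]
      congr 1
      have h1 : q ^ (2 * i) = (q ^ 2) ^ (2 * i - 2 - m) * (q ^ (2 * i) * q⁻¹ ^ (2 * (2 * i - 2 - m))) := by
        rw [← pow_mul, mul_left_comm, ← mul_pow, mul_inv_cancel₀ H.q0]; simp
      have h2 : q⁻¹ ^ (2 * (2 * i - 2 - m)) * q ^ (2 * (2 * i - 2 - m)) = 1 := by
        rw [← mul_pow, inv_mul_cancel₀ H.q0, one_pow]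
      have h3 : q ^ (2 * (n ^ 2 - 2 - m) + 2 * i) = q ^ (n ^ 2 - 2 * i + 2 * (2 * i - 2 - m)) := by
        have : 2 * (n ^ 2 - 2 - m) + 2 * i = n ^ 2 + (n ^ 2 - 2 * i + 2 * (2 * i - 2 - m)) := by omega
        rw [this, pow_add, H.hq.pow_eq_one, one_mul]
      rw [← pow_mul, ← pow_mul]
      rw [pow_add, pow_add] at h3
      calc _ = q⁻¹ ^ (2 * (2 * i - 2 - m)) * (q ^ (2 * (n ^ 2 - 2 - m)) * q ^ (2 * i)) := by ring
        _ = q ^ (n ^ 2 - 2 * i) * (q⁻¹ ^ (2 * (2 * i - 2 - m)) * q ^ (2 * (2 * i - 2 - m))) := by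
          rw [h3]; ring
        _ = _ := by rw [h2, mul_one]
    · have := skew_smul (X := U k n q) (zF H.hn H.h4 H.hq) (zEe H i hj (2 * i - 2 - m)) (n ^ 2 - 2 - m)
      simp only [smul_eq_mul] at this
      rw [this]
      congr 1
      rw [← mul_assoc, ← pow_add]
      have : Even (n ^ 2 - 2 - m + (2 * i - 2 - m)) := by
        obtain ⟨c, hc⟩ := H.even
        exact ⟨2 * c - 2 + i - m, by omega⟩
      rw [this.neg_one_pow, one_mul]
  · exact ⟨0, Submodule.zero_mem _, by simp, by simp, by simp⟩
  · rintro _ _ _ _ ⟨x, hx, rfl, hx1, hx2⟩ ⟨y, hy, rfl, hy1, hy2⟩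
    exact ⟨x + y, Submodule.add_mem _ hx hy, by rw [mul_add], by rw [mul_add, hx1, hy1, smul_add], by rw [mul_add, hx2, hy2, smul_add]⟩
  · rintro c _ _ ⟨x, hx, rfl, hx1, hx2⟩
    exact ⟨c • x, Submodule.smul_mem _ _ hx, by rw [mul_smul_comm], by rw [mul_smul_comm, hx1, smul_comm], by rw [mul_smul_comm, hx2, smul_comm]⟩

theorem gam_spec [CharZero k] (H : Hyp k n q) {i j : ℕ} (hi : 1 ≤ i) (hi' : i ≤ n ^ 2 / 2) (hj : j ≤ 1) :
    F k n q * gam k n q i j = beta k n q i j ∧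
      gg k n q * gam k n q i j = q ^ (n ^ 2 - 2 * i) • gam k n q i j ∧
      zz k n q * gam k n q i j = (-1 : k) ^ j • gam k n q i j := by
  obtain ⟨y, hy, h1, h2, h3⟩ := exists_gam H hi hi' hj
  have hex : ∃! x, x ∈ pbw k n q ∧ F k n q * x = beta k n q i j := by
    refine ⟨y, ⟨hy, h1⟩, ?_⟩
    rintro x ⟨hx, hx1⟩
    exact sub_eq_zero.mp (pbw_inj H (Submodule.sub_mem _ hx hy) (by rw [mul_sub, h1, hx1, sub_self]))
  have hg : gam k n q i j = y := by
    unfold gam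
    rw [dif_pos hex]
    exact hex.unique hex.choose_spec.1 ⟨hy, h1⟩
  rw [hg]
  exact ⟨h1, h2, h3⟩

theorem alpha_F (H : Hyp k n q) (i j : ℕ) : F k n q * alpha k n q i j = 0 := by
  have h16 := H.N16
  unfold alpha
  rw [← mul_assoc, ← pow_succ', F_nil' (by omega), zero_mul]

theorem alpha_g (H : Hyp k n q) {i : ℕ} (hi : 1 ≤ i) (j : ℕ) :
    gg k n q * alpha k n q i j = q ^ (2 * i - 2) • alpha k n q i j := by
  have h16 := H.N16
  have := skew_smul (X := U k n q) (gF H.hn H.hq) (gg_e H i j) (n ^ 2 - 1)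
  simp only [smul_eq_mul] at this
  unfold alpha
  rw [this]
  congr 1
  rw [← pow_mul, ← pow_add, show 2 * (n ^ 2 - 1) + 2 * i = n ^ 2 + (n ^ 2 + (2 * i - 2)) by omega,
    pow_add, pow_add, H.hq.pow_eq_one, one_mul, one_mul]

theorem alpha_z [CharZero k] (H : Hyp k n q) (i : ℕ) {j : ℕ} (hj : j ≤ 1) :
    zz k n q * alpha k n q i j = (-1 : k) ^ (j + 1) • alpha k n q i j := by
  have h16 := H.N16
  have := skew_smul (X := U k n q) (zF H.hn H.h4 H.hq) (zz_e H i hj) (n ^ 2 - 1)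
  simp only [smul_eq_mul] at this
  unfold alpha
  rw [this]
  congr 1
  have : Odd (n ^ 2 - 1) := by
    obtain ⟨c, hc⟩ := H.even
    exact ⟨2 * c - 1, by omega⟩
  rw [this.neg_one_pow, pow_succ]; ring

end GamB
end QFL

namespace QFL

section Soc

variable {k : Type} [Field k] {n : ℕ} {q : k}

theorem cc_ne' (H : Hyp k n q) {d s : ℕ} (h0 : 0 < d) (hs : d < s) (hd : s < n ^ 2) :
    cc q d s ≠ 0 := by
  refine mul_ne_zero (gauss_ne_zero H.hqi (by omega) hd) ?_
  have h : q⁻¹ ^ (s - 1) = q⁻¹ ^ (s - d) * q⁻¹ ^ (d - 1) := by rw [← pow_add]; congr 1; omega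
  rw [h, mul_assoc, ← mul_pow, inv_mul_cancel₀ H.q0, one_pow, mul_one]
  intro h
  exact H.hqi.pow_ne_one_of_pos_of_lt (by omega) (by omega : s - d < n ^ 2) (sub_eq_zero.mp h).symm

/-- The `k`-span of the `E^s v`. -/
def Cyc (v : U k n q) : Submodule k (U k n q) :=
  Submodule.span k (Set.range fun s : ℕ => E k n q ^ s • v)

theorem cyc_mem (v : U k n q) (s : ℕ) : E k n q ^ s • v ∈ Cyc v :=
  Submodule.subset_span ⟨s, rfl⟩

theorem cyc_map {v : U k n q} (u : U k n q) {W : Submodule k (U k n q)}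
    (h : ∀ s, u • E k n q ^ s • v ∈ W) : ∀ x ∈ Cyc v, u • x ∈ W := by
  intro x hx
  refine Submodule.span_induction ?_ ?_ ?_ ?_ hx
  · rintro _ ⟨s, rfl⟩; exact h s
  · simp
  · intro x y _ _ hx hy; rw [smul_add]; exact Submodule.add_mem _ hx hy
  · intro c x _ hx; rw [smul_comm]; exact Submodule.smul_mem _ _ hx

theorem cyc_coeff {v : U k n q} {x : U k n q} (hx : x ∈ Cyc v) :
    ∃ f : ℕ → k, x = ∑ s ∈ Finset.range (n ^ 2), f s • E k n q ^ s • v := by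
  refine Submodule.span_induction ?_ ?_ ?_ ?_ hx
  · rintro _ ⟨s, rfl⟩
    refine ⟨fun t => if t = s then 1 else 0, ?_⟩
    by_cases hs : s < n ^ 2
    · simp [ite_smul, hs]
    · simp [hs, E_nil' (not_lt.mp hs)]
  · exact ⟨0, by simp⟩
  · rintro _ _ _ _ ⟨f, rfl⟩ ⟨f', rfl⟩
    exact ⟨f + f', by simp [add_smul, Finset.sum_add_distrib]⟩
  · rintro a _ _ ⟨f, rfl⟩
    exact ⟨a • f, by simp [mul_smul, Finset.smul_sum]⟩

theorem cyc_E {v : U k n q} : ∀ x ∈ Cyc v, E k n q • x ∈ Cyc v :=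
  cyc_map _ fun s => by rw [← mul_smul, ← pow_succ']; exact cyc_mem v _

theorem cyc_Es {v : U k n q} (t : ℕ) : ∀ x ∈ Cyc v, E k n q ^ t • x ∈ Cyc v :=
  cyc_map _ fun s => by rw [← mul_smul, ← pow_add]; exact cyc_mem v _

theorem cyc_K (H : Hyp k n q) {l e : k} {v : U k n q} (hg : gg k n q • v = l • v)
    (hz : zz k n q • v = e • v) : ∀ x ∈ Cyc v, K k n q • x ∈ Cyc v :=
  cyc_map _ fun s => by
    rw [K_eig (X := U k n q) H (skew_smul (gE H.hn H.hq) hg s) (skew_smul (zE H.hn H.h4 H.hq) hz s)]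
    exact Submodule.smul_mem _ _ (cyc_mem v s)

theorem cyc_Kh (H : Hyp k n q) {l e : k} {v : U k n q} (hg : gg k n q • v = l • v)
    (hz : zz k n q • v = e • v) : ∀ x ∈ Cyc v, Kh k n q • x ∈ Cyc v :=
  cyc_map _ fun s => by
    rw [Kh_eig (X := U k n q) H (skew_smul (gE H.hn H.hq) hg s) (skew_smul (zE H.hn H.h4 H.hq) hz s)]
    exact Submodule.smul_mem _ _ (cyc_mem v s)

theorem low_cc (H : Hyp k n q) {d : ℕ} {v : U k n q} (hF : F k n q • v = 0)
    (hg : gg k n q • v = q ^ (d - 1) • v) (s : ℕ) :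
    F k n q • (E k n q ^ s • v) = cc q d s • (E k n q ^ (s - 1) • v) := by
  cases s with
  | zero => simp only [pow_zero, one_smul, cc_zero, zero_smul, hF]
  | succ s => rw [lowF (X := U k n q) H hF hg]; simp [cc]

theorem cyc_F (H : Hyp k n q) {d : ℕ} {v : U k n q} (hF : F k n q • v = 0)
    (hg : gg k n q • v = q ^ (d - 1) • v) : ∀ x ∈ Cyc v, F k n q • x ∈ Cyc v :=
  cyc_map _ fun s => by
    rw [low_cc H hF hg]; exact Submodule.smul_mem _ _ (cyc_mem v _)

/-- Data of `α` and `γ`. -/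
structure AG (k : Type) [Field k] (n : ℕ) (q : k) (d₀ d : ℕ) (a c : U k n q) (e e' : k) : Prop where
  aF : F k n q • a = 0
  ag : gg k n q • a = q ^ (d₀ - 1) • a
  az : zz k n q • a = e • a
  aE : E k n q ^ (n ^ 2 - 1) • a ≠ 0
  cF : F k n q • c = E k n q ^ (d₀ - 1) • a
  cg : gg k n q • c = q ^ (d - 1) • c
  cz : zz k n q • c = e' • c
  hd₀ : 0 < d₀
  hd : 0 < d
  hs : d₀ + d = n ^ 2

namespace AG
variable {d₀ d : ℕ} {a c : U k n q} {e e' : k}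

theorem Fc (H : Hyp k n q) (h : AG k n q d₀ d a c e e') (s : ℕ) :
    F k n q • E k n q ^ s • c = q⁻¹ ^ s • E k n q ^ (s + d₀ - 1) • a +
      cc q d s • E k n q ^ (s - 1) • c := by
  have := h.hd₀
  cases s with
  | zero => simp only [pow_zero, one_smul, cc_zero, zero_smul, h.cF, add_zero, zero_add]
  | succ s =>
    rw [← mul_smul, FE_pow EFrel (gE H.hn H.hq)]
    simp only [add_smul, sub_smul, mul_smul, smul_assoc, h.cF, h.cg, one_smul]
    rw [smul_comm (E k n q ^ s) (q ^ (d - 1)) c, ← mul_smul (E k n q ^ (s + 1)) (E k n q ^ (d₀ - 1)) a, ← pow_add,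
      show s + 1 + (d₀ - 1) = s + 1 + d₀ - 1 by omega]
    simp [cc, sub_smul, mul_smul]

theorem step1 (f : ℕ → k) (hf : ∃ s < n ^ 2, f s ≠ 0) :
    E k n q ^ (n ^ 2 - 1) • a ∈ Submodule.span (U k n q)
      {∑ s ∈ Finset.range (n ^ 2), f s • E k n q ^ s • a} := by
  classical
  have h1 := Nat.find_spec hf
  have h2 : ∀ s < Nat.find hf, f s = 0 := by
    intro s hs
    by_contra h
    exact Nat.find_min hf hs ⟨hs.trans h1.1, h⟩
  have h3 := nil_top (X := U k n q) (v := a) (d := n ^ 2) (by rw [E_nil]; exact zero_mul _) f _ h1.1 h2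
  rw [Submodule.mem_span_singleton]
  refine ⟨(f (Nat.find hf))⁻¹ • E k n q ^ (n ^ 2 - 1 - Nat.find hf), ?_⟩
  rw [smul_assoc, h3, smul_smul, inv_mul_cancel₀ h1.2, one_smul]

theorem step2 (H : Hyp k n q) (h : AG k n q d₀ d a c e e') (m : ℕ) :
    ∀ s, s + d₀ = m → d ≤ s → s < n ^ 2 → ∀ (κ : k) (y : U k n q), κ ≠ 0 → y ∈ Cyc a →
      E k n q ^ (n ^ 2 - 1) • a ∈ Submodule.span (U k n q) {κ • E k n q ^ s • c + y} := by
  have hh := h.hs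
  have := h.hd₀
  have := h.hd
  induction m with
  | zero => intro s h1 h2; omega
  | succ m ih =>
    intro s hsm hs hsN κ y hκ hy
    have hFx : F k n q • (κ • E k n q ^ s • c + y) ∈ Submodule.span (U k n q) {κ • E k n q ^ s • c + y} :=
      Submodule.smul_mem _ _ (Submodule.mem_span_singleton_self _)
    have hle := (Submodule.span_singleton_le_iff_mem _ _).mpr hFx
    apply hle
    rw [smul_add, smul_comm, h.Fc H, smul_add]
    rcases hs.lt_or_eq with hs' | rfl
    · have := ih (s - 1) (by omega) (by omega) (by omega) (κ * cc q d s)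
        (κ • q⁻¹ ^ s • E k n q ^ (s + d₀ - 1) • a + F k n q • y)
        (mul_ne_zero hκ (cc_ne' H h.hd hs' hsN))
        (Submodule.add_mem _ (Submodule.smul_mem _ _ (Submodule.smul_mem _ _ (cyc_mem _ _)))
          (cyc_F H h.aF h.ag _ hy))
      convert this using 3
      rw [mul_smul]; abel
    · obtain ⟨f, rfl⟩ := cyc_coeff hy
      have e1 : F k n q • ∑ s ∈ Finset.range (n ^ 2), f s • E k n q ^ s • a =
          ∑ s ∈ Finset.range (n ^ 2 - 1), (f (s + 1) * cc q d₀ (s + 1)) • E k n q ^ s • a := by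
        rw [show n ^ 2 = n ^ 2 - 1 + 1 by omega, Finset.sum_range_succ', smul_add, Finset.smul_sum,
          smul_comm (F k n q) (f 0), low_cc H h.aF h.ag, cc_zero, zero_smul, smul_zero, add_zero]
        refine Finset.sum_congr rfl fun s _ => ?_
        rw [smul_comm, low_cc H h.aF h.ag, smul_smul]; simp
      have e2 := step1 (a := a) (n := n) (q := q) (fun s => if s = n ^ 2 - 1 then κ * q⁻¹ ^ d else f (s + 1) * cc q d₀ (s + 1))
        ⟨n ^ 2 - 1, by omega, by
          simp only [if_true]; exact mul_ne_zero hκ (pow_ne_zero _ (inv_ne_zero H.q0))⟩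
      convert e2 using 3
      rw [e1, cc_self H, zero_smul, smul_zero, add_zero]
      conv_rhs => rw [show n ^ 2 = n ^ 2 - 1 + 1 by omega, Finset.sum_range_succ]
      rw [add_comm]
      congr 1
      · refine Finset.sum_congr rfl fun s hs => ?_
        have := Finset.mem_range.mp hs
        simp only [Nat.sub_add_cancel (by omega : 1 ≤ n ^ 2)]
        rw [if_neg (by omega)]
      · simp only [Nat.sub_add_cancel (by omega : 1 ≤ n ^ 2), if_true]
        rw [smul_smul, show d + d₀ - 1 = n ^ 2 - 1 by omega]

theorem step3 (H : Hyp k n q) (h : AG k n q d₀ d a c e e') {x : U k n q}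
    (hx : x ∈ Submodule.span (U k n q) {c}) (hx0 : x ≠ 0) :
    E k n q ^ (n ^ 2 - 1) • a ∈ Submodule.span (U k n q) {x} := by
  classical
  have hh := h.hs
  have := h.hd₀
  have := h.hd
  obtain ⟨u, rfl⟩ := Submodule.mem_span_singleton.mp hx
  have key : ∀ x ∈ Cyc a ⊔ Cyc c, u • x ∈ Cyc a ⊔ Cyc c := by
    have aux : ∀ g : U k n q, (∀ x ∈ Cyc a, g • x ∈ Cyc a ⊔ Cyc c) → (∀ x ∈ Cyc c, g • x ∈ Cyc a ⊔ Cyc c) →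
        ∀ x ∈ Cyc a ⊔ Cyc c, g • x ∈ Cyc a ⊔ Cyc c := by
      intro g h1 h2 x hx
      obtain ⟨y, hy, z, hz, rfl⟩ := Submodule.mem_sup.mp hx
      rw [smul_add]
      exact Submodule.add_mem _ (h1 _ hy) (h2 _ hz)
    refine stable_of_gens (X := U k n q) (Cyc a ⊔ Cyc c) ?_ ?_ ?_ ?_ u <;> apply aux
    · exact fun x hx => Submodule.mem_sup_left (cyc_K H h.ag h.az x hx)
    · exact fun x hx => Submodule.mem_sup_right (cyc_K H h.cg h.cz x hx)
    · exact fun x hx => Submodule.mem_sup_left (cyc_Kh H h.ag h.az x hx)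
    · exact fun x hx => Submodule.mem_sup_right (cyc_Kh H h.cg h.cz x hx)
    · exact fun x hx => Submodule.mem_sup_left (cyc_E x hx)
    · exact fun x hx => Submodule.mem_sup_right (cyc_E x hx)
    · exact fun x hx => Submodule.mem_sup_left (cyc_F H h.aF h.ag x hx)
    · refine cyc_map _ fun s => ?_
      rw [h.Fc H]
      exact Submodule.add_mem _ (Submodule.mem_sup_left (Submodule.smul_mem _ _ (cyc_mem _ _)))
        (Submodule.mem_sup_right (Submodule.smul_mem _ _ (cyc_mem _ _)))
  obtain ⟨y, hy, z, hz, hyz⟩ := Submodule.mem_sup.mp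
    (key c (Submodule.mem_sup_right (by simpa only [pow_zero, one_smul] using cyc_mem c 0)))
  rw [← hyz] at hx0 ⊢
  obtain ⟨f, rfl⟩ := cyc_coeff hy
  obtain ⟨g, rfl⟩ := cyc_coeff hz
  by_cases hg : ∃ s < n ^ 2, g s ≠ 0
  · have h1 := Nat.find_spec hg
    have h2 : ∀ s < Nat.find hg, g s = 0 := by
      intro s hs
      by_contra h
      exact Nat.find_min hg hs ⟨hs.trans h1.1, h⟩
    have h3 := nil_top (X := U k n q) (v := c) (d := n ^ 2) (by rw [E_nil]; exact zero_mul _) g _ h1.1 h2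
    have h4 := h.step2 H (n ^ 2 - 1 + d₀) (n ^ 2 - 1) rfl (by omega) (by omega) (g (Nat.find hg))
      (E k n q ^ (n ^ 2 - 1 - Nat.find hg) • ∑ s ∈ Finset.range (n ^ 2), f s • E k n q ^ s • a) h1.2
      (cyc_Es _ _ hy)
    rw [← h3, add_comm, ← smul_add] at h4
    exact (Submodule.span_singleton_le_iff_mem _ _).mpr
      (Submodule.smul_mem _ _ (Submodule.mem_span_singleton_self _)) h4
  · push Not at hg
    have hz0 : ∑ s ∈ Finset.range (n ^ 2), g s • E k n q ^ s • c = 0 :=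
      Finset.sum_eq_zero fun s hs => by rw [hg s (Finset.mem_range.mp hs), zero_smul]
    rw [hz0, add_zero] at hx0 ⊢
    apply step1
    by_contra hf
    push Not at hf
    exact hx0 (Finset.sum_eq_zero fun s hs => by rw [hf s (Finset.mem_range.mp hs), zero_smul])

theorem c_ne (h : AG k n q d₀ d a c e e') : c ≠ 0 := by
  rintro rfl
  have := h.hs
  have := h.hd
  have := h.cF
  rw [smul_zero] at this
  apply h.aE
  rw [show n ^ 2 - 1 = n ^ 2 - 1 - (d₀ - 1) + (d₀ - 1) by omega, pow_add, mul_smul, ← this, smul_zero]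

theorem soc_eq (H : Hyp k n q) (h : AG k n q d₀ d a c e e') :
    sSup {N : Submodule (U k n q) (U k n q) | N ≤ Submodule.span (U k n q) {c} ∧ IsSimpleModule (U k n q) N} =
      Submodule.span (U k n q) {E k n q ^ (n ^ 2 - 1) • a} := by
  have hP : Submodule.span (U k n q) {E k n q ^ (n ^ 2 - 1) • a} ≤ Submodule.span (U k n q) {c} :=
    (Submodule.span_singleton_le_iff_mem _ _).mpr
      (h.step3 H (Submodule.mem_span_singleton_self _) h.c_ne)
  have hb : Submodule.span (U k n q) {E k n q ^ (n ^ 2 - 1) • a} ≠ ⊥ := by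
    rw [Ne, Submodule.span_singleton_eq_bot]; exact h.aE
  have hle : ∀ M : Submodule (U k n q) (U k n q), M ≤ Submodule.span (U k n q) {c} → M ≠ ⊥ →
      Submodule.span (U k n q) {E k n q ^ (n ^ 2 - 1) • a} ≤ M := by
    intro M hM hM0
    obtain ⟨x, hx, hx0⟩ := Submodule.exists_mem_ne_zero_of_ne_bot hM0
    refine (Submodule.span_singleton_le_iff_mem _ _).mpr ?_
    exact (Submodule.span_singleton_le_iff_mem _ _).mpr hx (h.step3 H (hM hx) hx0)
  apply le_antisymm
  · refine sSup_le ?_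
    rintro M ⟨hM, hs⟩
    rw [isSimpleModule_iff_isAtom] at hs
    exact ((hs.le_iff.mp (hle M hM hs.1)).resolve_left hb).ge
  · refine le_sSup ⟨hP, ?_⟩
    rw [isSimpleModule_iff_isAtom]
    refine ⟨hb, fun M hM => ?_⟩
    by_contra h0
    exact hM.not_ge (hle M (hM.le.trans hP) h0)

theorem low_mem (H : Hyp k n q) (h : AG k n q d₀ d a c e e') (m : ℕ) (hm : m + d₀ ≤ n ^ 2 - 1) :
    E k n q ^ (n ^ 2 - 1 - m) • a ∈ Submodule.span (U k n q) {E k n q ^ (n ^ 2 - 1) • a} := by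
  have hh := h.hs
  have := h.hd₀
  induction m with
  | zero => exact Submodule.mem_span_singleton_self _
  | succ m ih =>
    have h1 := Submodule.smul_mem _ (F k n q) (ih (by omega))
    rw [low_cc H h.aF h.ag] at h1
    have h2 := cc_ne' H h.hd₀ (by omega : d₀ < n ^ 2 - 1 - m) (by omega)
    have h3 := Submodule.smul_of_tower_mem _ (cc q d₀ (n ^ 2 - 1 - m))⁻¹ h1
    rw [smul_smul, inv_mul_cancel₀ h2, one_smul] at h3
    rwa [show n ^ 2 - 1 - (m + 1) = n ^ 2 - 1 - m - 1 by omega]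

theorem low_F (H : Hyp k n q) (h : AG k n q d₀ d a c e e') : F k n q • E k n q ^ d₀ • a = 0 := by
  rw [low_cc H h.aF h.ag, cc_self H, zero_smul]

theorem low_g (H : Hyp k n q) (h : AG k n q d₀ d a c e e') :
    gg k n q • E k n q ^ d₀ • a = q ^ (d - 1) • E k n q ^ d₀ • a := by
  have hh := h.hs
  have := h.hd₀
  have := h.hd
  rw [skew_smul (X := U k n q) (gE H.hn H.hq) h.ag]
  congr 1
  have h1 : q ^ (n ^ 2) = 1 := H.hq.pow_eq_one
  have h2 : q ^ (d - 1) * q ^ (2 * d₀) = q ^ (d₀ - 1) := by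
    rw [← pow_add, show d - 1 + 2 * d₀ = n ^ 2 + (d₀ - 1) by omega, pow_add, h1, one_mul]
  rw [← h2, ← pow_mul, mul_left_comm, ← mul_pow, inv_mul_cancel₀ H.q0, one_pow, mul_one]

theorem ty (H : Hyp k n q) (h : AG k n q d₀ d a c e e') {j : ℕ} (hj : (-1 : k) ^ d₀ * e = (-1) ^ j)
    (S : Submodule (U k n q) (U k n q)) (hS : S = Submodule.span (U k n q) {E k n q ^ (n ^ 2 - 1) • a}) :
    ∃ v : S, IsTy k n q S d j v := by
  have hh := h.hs
  have h0 := h.hd₀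
  have h1 := h.hd
  have hlz : zz k n q • E k n q ^ d₀ • a = (-1 : k) ^ j • E k n q ^ d₀ • a := by
    rw [skew_smul (X := U k n q) (zE H.hn H.h4 H.hq) h.az, hj]
  have hm : E k n q ^ d₀ • a ∈ S := by
    have := h.low_mem H (n ^ 2 - 1 - d₀) (by omega)
    rw [show n ^ 2 - 1 - (n ^ 2 - 1 - d₀) = d₀ by omega] at this
    rwa [hS]
  refine ⟨⟨_, hm⟩, ⟨Subtype.ext (h.low_F H), Subtype.ext (h.low_g H), Subtype.ext hlz, Subtype.ext ?_, ?_, ?_, h1, by omega⟩⟩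
  · change E k n q ^ d • E k n q ^ d₀ • a = 0
    rw [← mul_smul, ← pow_add, E_nil' (by omega), zero_smul]
  · intro h2
    have h3 : E k n q ^ (d - 1) • E k n q ^ d₀ • a = 0 := congrArg Subtype.val h2
    rw [← mul_smul, ← pow_add, show d - 1 + d₀ = n ^ 2 - 1 by omega] at h3
    exact h.aE h3
  · intro x
    have hx : (x : U k n q) ∈ Cyc (E k n q ^ d₀ • a) := by
      have hx := x.2
      simp only [hS] at hx
      obtain ⟨u, hu⟩ := Submodule.mem_span_singleton.mp hx
      rw [← hu]
      refine stable_of_gens (X := U k n q) (Cyc (E k n q ^ d₀ • a)) (cyc_K H (h.low_g H) hlz)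
        (cyc_Kh H (h.low_g H) hlz) cyc_E (cyc_F H (h.low_F H) (h.low_g H)) u _ ?_
      rw [show n ^ 2 - 1 = n ^ 2 - 1 - d₀ + d₀ by omega, pow_add, mul_smul]
      exact cyc_mem _ _
    have h5 : Submodule.map (S.subtype.restrictScalars k)
      (Submodule.span k (Set.range fun s : ℕ => E k n q ^ s • (⟨_, hm⟩ : S))) = Cyc (E k n q ^ d₀ • a) := by
      rw [Submodule.map_span, ← Set.range_comp]
      rfl
    rw [← h5] at hx
    obtain ⟨y, hy, hyx⟩ := hx
    have : y = x := Subtype.ext hyx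
    exact this ▸ hy

end AG

theorem S_ty [CharZero k] (H : Hyp k n q) {i j : ℕ} (hi : 1 ≤ i) (hi' : i ≤ n ^ 2 / 2) (hj : j ≤ 1) :
    ∃ v : S k n q i j, IsTy k n q (S k n q i j) (n ^ 2 - 2 * i + 1) j v := by
  have h16 := H.N16
  obtain ⟨g1, g2, g3⟩ := gam_spec H hi hi' hj
  have ag : AG k n q (2 * i - 1) (n ^ 2 - 2 * i + 1) (alpha k n q i j) (gam k n q i j)
      ((-1) ^ (j + 1)) ((-1) ^ j) :=
    { aF := alpha_F H i j
      ag := by rw [show 2 * i - 1 - 1 = 2 * i - 2 by omega]; exact alpha_g H hi j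
      az := alpha_z H i hj
      aE := E_alpha_ne H hj
      cF := by rw [show 2 * i - 1 - 1 = 2 * i - 2 by omega]; exact g1
      cg := by rw [show n ^ 2 - 2 * i + 1 - 1 = n ^ 2 - 2 * i by omega]; exact g2
      cz := g3
      hd₀ := by omega
      hd := by omega
      hs := by omega }
  refine ag.ty H ?_ (S k n q i j) (ag.soc_eq H)
  rw [← pow_add, show 2 * i - 1 + (j + 1) = 2 * i + j by omega, pow_add, pow_mul]; simp

end Soc
end QFL

namespace QFL

section Ten

variable {k : Type} [Field k] {n : ℕ} {q : k}

/-- Abstract description of the tensor product of two simple modules. -/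
structure TT (k : Type) [Field k] (n : ℕ) (q : k) (T : Type) [AddCommGroup T] [Module k T]
    [Module (U k n q) T] (d₁ d₂ j : ℕ) (b : ℕ → ℕ → T) (A B A' B' : ℕ → ℕ → k) : Prop where
  hd₁ : 0 < d₁
  hd₂ : 0 < d₂
  hdN : d₁ + d₂ ≤ n ^ 2
  b0 : ∀ s t, d₁ ≤ s ∨ d₂ ≤ t → b s t = 0
  F : ∀ s t, F k n q • b s t = A s t • b (s - 1) t + B s t • b s (t - 1)
  E : ∀ s t, E k n q • b s t = A' s t • b (s + 1) t + B' s t • b s (t + 1)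
  g : ∀ s t, gg k n q • b s t = ((q⁻¹ ^ 2) ^ (s + t) * q ^ (d₁ - 1 + (d₂ - 1))) • b s t
  z : ∀ s t, zz k n q • b s t = (-1 : k) ^ (s + t + j) • b s t
  A0 : ∀ t, A 0 t = 0
  B0 : ∀ s, B s 0 = 0
  Ad : ∀ t, A d₁ t = 0
  Ane : ∀ s t, 0 < s → s < d₁ → t < d₂ → A s t ≠ 0
  Bne : ∀ s t, 0 < t → s < d₁ → t < d₂ → B s t ≠ 0
  co : ∀ s t, s < d₁ → t < d₂ → ∃ φ : T →ₗ[k] k,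
    ∀ s' t', φ (b s' t') = if s' = s ∧ t' = t then 1 else 0
  fin : Module.Finite k T
  rk : Module.finrank k T = d₁ * d₂

namespace TT

variable {T : Type} [AddCommGroup T] [Module k T] [Module (U k n q) T]
  [IsScalarTower k (U k n q) T] {d₁ d₂ j : ℕ} {b : ℕ → ℕ → T} {A B A' B' : ℕ → ℕ → k}

/-- Degree `p` part. -/
def Deg (k : Type) [Field k] {T : Type} [AddCommGroup T] [Module k T] (b : ℕ → ℕ → T) (p : ℕ) :
    Submodule k T := Submodule.span k {x | ∃ s t, s + t = p ∧ x = b s t}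

theorem deg_coeff {p : ℕ} {x : T} (hx : x ∈ Deg k b p) :
    ∃ f : ℕ → k, x = ∑ s ∈ Finset.range (p + 1), f s • b s (p - s) := by
  refine Submodule.span_induction ?_ ?_ ?_ ?_ hx
  · rintro _ ⟨s, t, rfl, rfl⟩
    refine ⟨fun t => if t = s then 1 else 0, ?_⟩
    have : s < s + t + 1 := by omega
    simp [ite_smul, this]
  · exact ⟨0, by simp⟩
  · rintro _ _ _ _ ⟨f, rfl⟩ ⟨f', rfl⟩
    exact ⟨f + f', by simp [add_smul, Finset.sum_add_distrib]⟩
  · rintro a _ _ ⟨f, rfl⟩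
    exact ⟨a • f, by simp [mul_smul, Finset.smul_sum]⟩

theorem deg_E (h : TT k n q T d₁ d₂ j b A B A' B') {p : ℕ} {x : T} (hx : x ∈ Deg k b p) :
    QFL.E k n q • x ∈ Deg k b (p + 1) := by
  refine Submodule.span_induction ?_ ?_ ?_ ?_ hx
  · rintro _ ⟨s, t, rfl, rfl⟩
    rw [h.E]
    exact Submodule.add_mem _ (Submodule.smul_mem _ _ (Submodule.subset_span ⟨s + 1, t, by omega, rfl⟩))
      (Submodule.smul_mem _ _ (Submodule.subset_span ⟨s, t + 1, by omega, rfl⟩))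
  · simp
  · intro x y _ _ hx hy; rw [smul_add]; exact Submodule.add_mem _ hx hy
  · intro c x _ hx; rw [smul_comm]; exact Submodule.smul_mem _ _ hx

theorem deg_Es (h : TT k n q T d₁ d₂ j b A B A' B') {p : ℕ} {x : T} (hx : x ∈ Deg k b p) (s : ℕ) :
    QFL.E k n q ^ s • x ∈ Deg k b (p + s) := by
  induction s with
  | zero => simpa using hx
  | succ s ih => rw [pow_succ', mul_smul]; exact h.deg_E ih

theorem deg_g (h : TT k n q T d₁ d₂ j b A B A' B') {p : ℕ} {x : T} (hx : x ∈ Deg k b p) :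
    gg k n q • x = ((q⁻¹ ^ 2) ^ p * q ^ (d₁ - 1 + (d₂ - 1))) • x := by
  refine Submodule.span_induction ?_ ?_ ?_ ?_ hx
  · rintro _ ⟨s, t, rfl, rfl⟩
    exact h.g s t
  · simp
  · intro x y _ _ hx hy; rw [smul_add, hx, hy, smul_add]
  · intro c x _ hx; rw [smul_comm, hx, smul_comm]

theorem deg_z (h : TT k n q T d₁ d₂ j b A B A' B') {p : ℕ} {x : T} (hx : x ∈ Deg k b p) :
    zz k n q • x = (-1 : k) ^ (p + j) • x := by
  refine Submodule.span_induction ?_ ?_ ?_ ?_ hx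
  · rintro _ ⟨s, t, rfl, rfl⟩
    exact h.z s t
  · simp
  · intro x y _ _ hx hy; rw [smul_add, hx, hy, smul_add]
  · intro c x _ hx; rw [smul_comm, hx, smul_comm]

theorem F_inj (h : TT k n q T d₁ d₂ j b A B A' B') {p : ℕ} (hp₁ : d₁ ≤ p) {x : T}
    (hx : x ∈ Deg k b p) (hF : QFL.F k n q • x = 0) : x = 0 := by
  have h1 := h.hd₁
  obtain ⟨f, rfl⟩ := deg_coeff hx
  have key : ∀ m s, s + 1 + m = d₁ → p - s < d₂ → f s = 0 := by
    intro m
    induction m with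
    | zero =>
      intro s hs ht
      obtain ⟨φ, hφ⟩ := h.co s (p - 1 - s) (by omega) (by omega)
      have e := congrArg φ hF
      rw [Finset.smul_sum, map_sum, map_zero, Finset.sum_eq_single s] at e
      · rw [smul_comm, h.F, map_smul, map_add, map_smul, map_smul, hφ, hφ, if_neg (by omega), if_pos (by omega)] at e
        simp only [smul_eq_mul, mul_zero, zero_add, mul_one] at e
        exact (mul_eq_zero.mp e).resolve_right (h.Bne _ _ (by omega) (by omega) ht)
      · intro s' _ hne
        rw [smul_comm, h.F, map_smul, map_add, map_smul, map_smul, hφ, hφ, if_neg (by omega : ¬ (s' = s ∧ _))]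
        by_cases hd : s' = d₁
        · rw [hd, h.Ad]; simp
        · rw [if_neg (by omega)]; simp
      · intro hh; exact absurd (Finset.mem_range.mpr (by omega)) hh
    | succ m ih =>
      intro s hs ht
      have ih' := ih (s + 1) (by omega) (by omega)
      obtain ⟨φ, hφ⟩ := h.co s (p - 1 - s) (by omega) (by omega)
      have e := congrArg φ hF
      rw [Finset.smul_sum, map_sum, map_zero, Finset.sum_eq_single s] at e
      · rw [smul_comm, h.F, map_smul, map_add, map_smul, map_smul, hφ, hφ, if_neg (by omega), if_pos (by omega)] at e
        simp only [smul_eq_mul, mul_zero, zero_add, mul_one] at e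
        exact (mul_eq_zero.mp e).resolve_right (h.Bne _ _ (by omega) (by omega) ht)
      · intro s' _ hne
        by_cases hd : s' = s + 1
        · rw [hd, ih']; simp
        rw [smul_comm, h.F, map_smul, map_add, map_smul, map_smul, hφ, hφ, if_neg (by omega : ¬ (s' = s ∧ _)), if_neg (by omega)]
        simp
      · intro hh; exact absurd (Finset.mem_range.mpr (by omega)) hh
  refine Finset.sum_eq_zero fun s hs => ?_
  by_cases h1 : d₁ ≤ s ∨ d₂ ≤ p - s
  · rw [h.b0 _ _ h1, smul_zero]
  · rw [key (d₁ - 1 - s) s (by omega) (by omega), zero_smul]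

theorem exists_low (H : Hyp k n q) (h : TT k n q T d₁ d₂ j b A B A' B') {m : ℕ} (hm₁ : m < d₁) (hm₂ : m < d₂) :
    ∃ w : T, QFL.F k n q • w = 0 ∧ gg k n q • w = q ^ (d₁ + d₂ - 1 - 2 * m - 1) • w ∧
      zz k n q • w = (-1 : k) ^ (m + j) • w ∧ QFL.E k n q ^ (d₁ + d₂ - 1 - 2 * m) • w = 0 ∧
      ∃ x : ℕ → k, x 0 = 1 ∧ w = ∑ s ∈ Finset.range (m + 1), x s • b s (m - s) := by
  have hd1 := h.hd₁
  have hd2 := h.hd₂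
  let x : ℕ → k := fun s => Nat.rec 1 (fun s y => - y * B s (m - s) / A (s + 1) (m - 1 - s)) s
  have x0 : x 0 = 1 := rfl
  have xs : ∀ s, x (s + 1) = - x s * B s (m - s) / A (s + 1) (m - 1 - s) := fun s => rfl
  clear_value x
  let w : T := ∑ s ∈ Finset.range (m + 1), x s • b s (m - s)
  have hw : w ∈ Deg k b m := by
    refine Submodule.sum_mem _ fun s hs => Submodule.smul_mem _ _ (Submodule.subset_span ⟨s, m - s, ?_, rfl⟩)
    have := Finset.mem_range.mp hs
    omega
  have hF : QFL.F k n q • w = 0 := by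
    cases m with
    | zero => simp [w, h.F, h.A0, h.B0, x0]
    | succ m =>
      simp only [w]
      rw [Finset.smul_sum]
      have e1 : ∀ s, QFL.F k n q • x s • b s (m + 1 - s) = (x s * A s (m + 1 - s)) • b (s - 1) (m + 1 - s) +
          (x s * B s (m + 1 - s)) • b s (m - s) := by
        intro s
        rw [smul_comm, h.F, smul_add, smul_smul, smul_smul, show m + 1 - s - 1 = m - s by omega]
      simp only [e1]
      rw [Finset.sum_add_distrib, Finset.sum_range_succ', Finset.sum_range_succ (fun s => (x s * B s (m + 1 - s)) • b s (m - s)),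
        h.A0, Nat.sub_self, h.B0]
      simp only [mul_zero, zero_smul, add_zero]
      rw [← Finset.sum_add_distrib]
      refine Finset.sum_eq_zero fun s hs => ?_
      have hs' := Finset.mem_range.mp hs
      rw [show m + 1 - (s + 1) = m - s by omega, show s + 1 - 1 = s by omega, ← add_smul, xs,
        show m + 1 - 1 - s = m - s by omega, div_mul_cancel₀ _ (h.Ane (s + 1) (m - s) (by omega) (by omega) (by omega))]
      rw [show -x s * B s (m + 1 - s) + x s * B s (m + 1 - s) = 0 by ring, zero_smul]
  have hg : gg k n q • w = q ^ (d₁ + d₂ - 1 - 2 * m - 1) • w := by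
    rw [h.deg_g hw]
    congr 1
    rw [show d₁ - 1 + (d₂ - 1) = 2 * m + (d₁ + d₂ - 1 - 2 * m - 1) by omega, pow_add, ← pow_mul, ← mul_assoc, ← mul_pow,
      inv_mul_cancel₀ H.q0, one_pow, one_mul]
  refine ⟨w, hF, hg, h.deg_z hw, ?_, x, x0, rfl⟩
  refine h.F_inj (p := m + (d₁ + d₂ - 1 - 2 * m)) (by omega) (h.deg_Es hw _) ?_
  obtain ⟨D, hD⟩ : ∃ D, d₁ + d₂ - 1 - 2 * m = D + 1 := ⟨d₁ + d₂ - 1 - 2 * m - 1, by omega⟩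
  rw [hD] at hg ⊢
  rw [lowF H hF hg]
  have := cc_self H (d := D + 1)
  unfold cc at this
  simp only [Nat.add_sub_cancel] at this ⊢
  rw [this, zero_smul]

theorem sum_dims (d₁ d₂ r : ℕ) (h1 : r ≤ d₁) (h2 : r ≤ d₂) :
    ∑ l ∈ Finset.range r, (d₁ + d₂ - 1 - 2 * l) = r * (d₁ + d₂ - r) := by
  induction r with
  | zero => simp
  | succ r ih =>
    rw [Finset.sum_range_succ, ih (by omega) (by omega)]
    obtain ⟨a, rfl⟩ := Nat.exists_eq_add_of_le h1
    obtain ⟨c, rfl⟩ := Nat.exists_eq_add_of_le h2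
    rw [show r + 1 + a + (r + 1 + c) - r = r + a + c + 2 by omega,
      show r + 1 + a + (r + 1 + c) - 1 - 2 * r = a + c + 1 by omega,
      show r + 1 + a + (r + 1 + c) - (r + 1) = r + a + c + 1 by omega]
    ring

open DirectSum in
theorem decomp (H : Hyp k n q) (h : TT k n q T d₁ d₂ j b A B A' B') (r : ℕ) (hr : r = min d₁ d₂)
    (Z : Fin r → Type) [∀ l, AddCommGroup (Z l)] [∀ l, Module k (Z l)] [∀ l, Module (U k n q) (Z l)]
    [∀ l, IsScalarTower k (U k n q) (Z l)]
    (hZ : ∀ l : Fin r, ∃ (D jj : ℕ) (v : Z l), IsTy k n q (Z l) D jj v ∧ D = d₁ + d₂ - 1 - 2 * (r - 1 - l) ∧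
      (-1 : k) ^ jj = (-1) ^ (r - 1 - l + j)) :
    Nonempty (T ≃ₗ[U k n q] ⨁ l, Z l) := by
  classical
  have hd1 := h.hd₁
  have hd2 := h.hd₂
  choose D jj v hv hD hjj using hZ
  have hw := fun l : Fin r => h.exists_low H (m := r - 1 - l) (by omega) (by omega)
  choose w wF wg wz wE x x0 xw using hw
  have hf := fun l : Fin r => (hv l).exists_hom H (w l) (wF l) (by rw [wg, hD]) (by rw [wz, hjj]) (by rw [hD]; exact wE l)
  choose f hf using hf
  let Φ : (⨁ l, Z l) →ₗ[U k n q] T := DirectSum.toModule (U k n q) (Fin r) T f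
  have hΦ : ∀ y : ⨁ l, Z l, Φ y = ∑ l, f l (y l) := by
    intro y
    conv_lhs => rw [← DirectSum.sum_univ_of y]
    rw [map_sum]
    refine Finset.sum_congr rfl fun l _ => ?_
    exact DirectSum.toModule_lof (U k n q) l (y l)
  have hinj0 : ∀ y : ⨁ l, Z l, Φ y = 0 → QFL.F k n q • y = 0 → y = 0 := by
    intro y hy hFy
    have h1 : ∀ l, ∃ c : k, y l = c • v l := by
      intro l
      refine (hv l).kerF H ?_
      have := congrArg (fun z : ⨁ l, Z l => z l) hFy
      exact this
    choose c hc using h1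
    rw [hΦ] at hy
    have hc0 : ∀ l, c l = 0 := by
      intro l
      obtain ⟨φ, hφ⟩ := h.co 0 (r - 1 - l) hd1 (by omega)
      have e := congrArg φ hy
      rw [map_sum, map_zero, Finset.sum_eq_single l] at e
      · rw [hc, LinearMap.map_smul_of_tower, hf, map_smul, xw, map_sum, Finset.sum_eq_single 0] at e
        · rw [map_smul, hφ, x0] at e
          simpa using e
        · intro s hs hs0
          rw [map_smul, hφ, if_neg (by omega), smul_zero]
        · intro hh; exact absurd (Finset.mem_range.mpr (by omega)) hh
      · intro l' _ hl
        rw [hc, LinearMap.map_smul_of_tower, hf, map_smul, xw, map_sum, Finset.sum_eq_zero, smul_zero]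
        intro s hs
        have hs' := Finset.mem_range.mp hs
        have : (l' : ℕ) ≠ l := fun hh => hl (Fin.ext hh)
        rw [map_smul, hφ, if_neg (by omega), smul_zero]
      · intro hh; exact absurd (Finset.mem_univ _) hh
    refine DFinsupp.ext fun l => ?_
    rw [hc, hc0, zero_smul]; rfl
  have hinj : Function.Injective Φ := by
    rw [injective_iff_map_eq_zero]
    have : ∀ s (y : ⨁ l, Z l), Φ y = 0 → QFL.F k n q ^ s • y = 0 → y = 0 := by
      intro s
      induction s with
      | zero => intro y _ h2; simpa using h2
      | succ s ih =>
        intro y h1 h2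
        refine hinj0 y h1 (ih _ (by rw [map_smul, h1, smul_zero]) ?_)
        rw [← mul_smul, ← pow_succ]; exact h2
    intro y hy
    refine this (n ^ 2) y hy ?_
    rw [F_nil, zero_smul]
  have hfin := fun l => (hv l).finite
  haveI := h.fin
  let Ψ : (⨁ l, Z l) →ₗ[k] T :=
    { toFun := Φ
      map_add' := Φ.map_add
      map_smul' := by
        intro c y
        rw [hΦ, hΦ]
        simp only [RingHom.id_apply]
        rw [Finset.smul_sum]
        refine Finset.sum_congr rfl fun l _ => ?_
        rw [DirectSum.smul_apply, LinearMap.map_smul_of_tower] }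
  have hrk : Module.finrank k (⨁ l, Z l) = Module.finrank k T := by
    rw [Module.finrank_directSum, h.rk]
    simp only [fun l => (hv l).finrank_eq, hD]
    rw [← Finset.sum_range (fun l => d₁ + d₂ - 1 - 2 * (r - 1 - l)),
      Finset.sum_range_reflect (fun l => d₁ + d₂ - 1 - 2 * l) r, sum_dims _ _ _ (by omega) (by omega)]
    rcases le_total d₁ d₂ with hle | hle
    · rw [hr, min_eq_left hle]; congr 1; omega
    · rw [hr, min_eq_right hle, mul_comm]; congr 1; omega
  have hsurj : Function.Surjective Φ :=
    (LinearMap.injective_iff_surjective_of_finrank_eq_finrank (f := Ψ) hrk).mp hinj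
  exact ⟨(LinearEquiv.ofBijective Φ ⟨hinj, hsurj⟩).symm⟩

end TT
end Ten
end QFL

namespace QFL

section TenB

variable {k : Type} [Field k] {n : ℕ} {q : k}

section Diag
variable {Y : Type} [AddCommGroup Y] [Module k Y] [Module (U k n q) Y] [IsScalarTower k (U k n q) Y]

theorem oneIdem_smul [CharZero k] (H : Hyp k n q) {y : Y} {r : ℕ} (hr : r < n)
    (hK : K k n q • y = (q ^ n) ^ r • y) {r' : ℕ} (hr' : r' < n) :
    oneIdem k n q r' • y = (if r' = r then (1 : k) else 0) • y := by
  have hnk : (n : k) ≠ 0 := by exact_mod_cast H.hn.ne'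
  have hp : IsPrimitiveRoot (q ^ n) n := H.hq.pow (pow_pos H.hn 2) (sq n)
  unfold oneIdem
  rw [smul_assoc, Finset.sum_smul]
  have e : ∀ t, ((q ^ n) ^ ((n - r') * t) • K k n q ^ t) • y = (((q ^ n) ^ (n - r' + r)) ^ t) • y := by
    intro t
    rw [smul_assoc, pow_smul_eig hK, smul_smul]
    generalize q ^ n = Q
    rw [← pow_mul, ← pow_mul, ← pow_add]
    congr 2; ring
  simp only [e]
  rw [← Finset.sum_smul, smul_smul]
  congr 1
  split_ifs with h
  · subst h
    rw [Nat.sub_add_cancel hr'.le, hp.pow_eq_one]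
    simp [hnk]
  · have h1 : (q ^ n) ^ (n - r' + r) ≠ 1 := by
      rw [Ne, hp.pow_eq_one_iff_dvd]
      intro hd
      obtain ⟨c, hc⟩ := hd
      rcases Nat.lt_or_ge c 1 with h0 | h0
      · interval_cases c; omega
      · rcases Nat.lt_or_ge c 2 with h2 | h2
        · interval_cases c; omega
        · have : n * 2 ≤ n * c := Nat.mul_le_mul_left _ h2
          omega
    rw [geom_sum_eq h1, ← pow_mul, mul_comm (n - r' + r), pow_mul, hp.pow_eq_one, one_pow]; simp

theorem diag [CharZero k] (H : Hyp k n q) {y : Y} {κ : k} (hK : K k n q • y = κ • y) :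
    ∃ fl fi o0 o1 : k, fl ≠ 0 ∧ flat k n q • y = fl • y ∧ Ring.inverse (flat k n q) • y = fi • y ∧
      oneIdem k n q 0 • y = o0 • y ∧ (∑ r ∈ Finset.Icc 1 (n - 1), oneIdem k n q r) • y = o1 • y ∧
      (o0 = 0 ∧ o1 = 1 ∨ o0 = 1 ∧ o1 = 0) := by
  classical
  by_cases hy : y = 0
  · subst hy
    exact ⟨1, 1, 0, 1, one_ne_zero, by simp, by simp, by simp, by simp, Or.inl ⟨rfl, rfl⟩⟩
  have hn := H.hn
  have hp : IsPrimitiveRoot (q ^ n) n := H.hq.pow (pow_pos H.hn 2) (sq n)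
  have h1 : κ ^ n = 1 := by
    have := pow_smul_eig hK n
    rw [K_pow_n, one_smul] at this
    have h2 : (1 - κ ^ n) • y = 0 := by rw [sub_smul, ← this, one_smul, sub_self]
    exact (sub_eq_zero.mp ((smul_eq_zero.mp h2).resolve_right hy)).symm
  haveI : NeZero n := ⟨hn.ne'⟩
  obtain ⟨r, hr, rfl⟩ := hp.eq_pow_of_pow_eq_one h1
  have hfl : flat k n q • y = q⁻¹ ^ r • y := by
    unfold flat
    rw [Finset.sum_smul, Finset.sum_eq_single r]
    · rw [smul_assoc, oneIdem_smul H hr hK hr, if_pos rfl, one_smul]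
    · intro r' hr' hne
      rw [smul_assoc, oneIdem_smul H hr hK (Finset.mem_range.mp hr'), if_neg hne, zero_smul, smul_zero]
    · intro hh; exact absurd (Finset.mem_range.mpr hr) hh
  have hfl0 : q⁻¹ ^ r ≠ 0 := pow_ne_zero _ (inv_ne_zero H.q0)
  have hinv : ∃ fi : k, Ring.inverse (flat k n q) • y = fi • y := by
    by_cases hu : IsUnit (flat k n q)
    · refine ⟨(q⁻¹ ^ r)⁻¹, ?_⟩
      have e := congrArg (fun t => Ring.inverse (flat k n q) • t) hfl
      rw [← mul_smul, Ring.inverse_mul_cancel _ hu, one_smul, smul_comm] at e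
      conv_rhs => rw [e]
      rw [smul_smul, inv_mul_cancel₀ hfl0, one_smul]
    · exact ⟨0, by rw [Ring.inverse_non_unit _ hu]; simp⟩
  obtain ⟨fi, hfi⟩ := hinv
  refine ⟨_, fi, if 0 = r then 1 else 0, if 0 = r then 0 else 1, hfl0, hfl, hfi, oneIdem_smul H hr hK hn, ?_, ?_⟩
  · rw [Finset.sum_smul]
    have e : ∀ r' ∈ Finset.Icc 1 (n - 1), oneIdem k n q r' • y = (if r' = r then (1 : k) else 0) • y := by
      intro r' hr'
      have := Finset.mem_Icc.mp hr'
      exact oneIdem_smul H hr hK (by omega)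
    rw [Finset.sum_congr rfl e, ← Finset.sum_smul, Finset.sum_ite_eq']
    congr 1
    by_cases h0 : 0 = r
    · rw [if_pos h0, if_neg]; simp; omega
    · rw [if_neg h0, if_pos]; simp; omega
  · split_ifs <;> simp

end Diag

variable {X Y : Type} [AddCommGroup X] [Module k X] [Module (U k n q) X]
    [IsScalarTower k (U k n q) X] [SMulCommClass (U k n q) k X] [AddCommGroup Y] [Module k Y] [Module (U k n q) Y]
    [IsScalarTower k (U k n q) Y] [SMulCommClass (U k n q) k Y]

/-- The action of `u ⊗ u` on `X ⊗ Y`. -/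
def act (k : Type) [Field k] (n : ℕ) (q : k) (X Y : Type) [AddCommGroup X] [Module k X] [Module (U k n q) X]
    [IsScalarTower k (U k n q) X] [SMulCommClass (U k n q) k X] [AddCommGroup Y] [Module k Y] [Module (U k n q) Y]
    [IsScalarTower k (U k n q) Y] [SMulCommClass (U k n q) k Y] :
    (U k n q ⊗[k] U k n q) →ₐ[k] Module.End k (X ⊗[k] Y) :=
  (Module.endTensorEndAlgHom (R := k) (S := k) (A := k) (M := X) (N := Y)).comp
      (Algebra.TensorProduct.map (Algebra.lsmul k k X) (Algebra.lsmul k k Y))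

theorem act_tmul (a b : U k n q) (x : X) (y : Y) :
    act k n q X Y (a ⊗ₜ b) (x ⊗ₜ y) = (a • x) ⊗ₜ (b • y) := rfl

/-- Generic form of the scalar tower condition. -/
def Tower (k : Type) [Field k] (n : ℕ) (q : k) (T : Type) [AddCommGroup T] [Module k T] [Module (U k n q) T] : Prop :=
  IsScalarTower k (U k n q) T

theorem tens_tower (Δ : U k n q →ₐ[k] (U k n q ⊗[k] U k n q)) :
    @Tower k _ n q (X ⊗[k] Y) _ _ (tensorModule k n q Δ X Y) := by
  unfold Tower
  refine @IsScalarTower.mk _ _ _ _ (_) _ (fun c u t => ?_)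
  change act k n q X Y (Δ (c • u)) t = c • act k n q X Y (Δ u) t
  rw [map_smul, map_smul]; rfl

theorem ty_co {d j : ℕ} {v : X} (h : IsTy k n q X d j v) (s : ℕ) (hs : s < d) :
    ∃ φ : X →ₗ[k] k, ∀ s', φ (E k n q ^ s' • v) = if s' = s then 1 else 0 := by
  refine ⟨h.basis.coord ⟨s, hs⟩, fun s' => ?_⟩
  by_cases hs' : s' < d
  · have := h.basis_apply ⟨s', hs'⟩
    simp only at this
    rw [← this, Module.Basis.coord_apply, Module.Basis.repr_self, Finsupp.single_apply]
    simp
  · rw [h.Epow (not_lt.mp hs'), map_zero, if_neg (by omega)]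

theorem tens_TT [CharZero k] (H : Hyp k n q) (Δ : U k n q →ₐ[k] (U k n q ⊗[k] U k n q)) (hΔ : IsComul k n q Δ)
    {d₁ d₂ j₁ j₂ : ℕ} {v : X} {u : Y} (hX : IsTy k n q X d₁ j₁ v) (hY : IsTy k n q Y d₂ j₂ u)
    (hdN : d₁ + d₂ ≤ n ^ 2) :
    letI := tensorModule k n q Δ X Y
    ∃ (b : ℕ → ℕ → X ⊗[k] Y) (A B A' B' : ℕ → ℕ → k), TT k n q (X ⊗[k] Y) d₁ d₂ (j₁ + j₂) b A B A' B' := by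
  letI := tensorModule k n q Δ X Y
  obtain ⟨ΔK, ΔKh, ΔE, ΔF⟩ := hΔ
  have Δg : Δ (gg k n q) = gg k n q ⊗ₜ gg k n q := by
    unfold gg Kinv
    rw [map_mul, map_pow, ΔK, ΔKh, Algebra.TensorProduct.tmul_pow, Algebra.TensorProduct.tmul_mul_tmul]
  have Δz : Δ (zz k n q) = zz k n q ⊗ₜ zz k n q := by
    unfold zz
    rw [map_mul, map_pow, ΔK, ΔKh, Algebra.TensorProduct.tmul_pow, Algebra.TensorProduct.tmul_mul_tmul]
  have hK1 := fun s => K_eig H (hX.gv H s) (hX.zv H s)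
  have hKh1 := fun s => Kh_eig H (hX.gv H s) (hX.zv H s)
  have hg1 := fun s => hX.gv H s
  have hgne : ∀ s, ((q⁻¹ ^ 2) ^ s * q ^ (d₁ - 1) : k) ≠ 0 := fun s =>
    mul_ne_zero (pow_ne_zero _ (pow_ne_zero _ (inv_ne_zero H.q0))) (pow_ne_zero _ H.q0)
  have hkne : ∀ s, (((q⁻¹ ^ 2) ^ s * q ^ (d₁ - 1)) ^ (n ^ 2 / 4 - n / 2) * ((-1) ^ s * (-1) ^ j₁) *
        ((q⁻¹ ^ 2) ^ s * q ^ (d₁ - 1)) : k) ≠ 0 := fun s =>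
    mul_ne_zero (mul_ne_zero (pow_ne_zero _ (hgne s)) (mul_ne_zero (pow_ne_zero _ (by simp)) (pow_ne_zero _ (by simp)))) (hgne s)
  generalize hkh : (fun s => (((q⁻¹ ^ 2) ^ s * q ^ (d₁ - 1)) ^ (n ^ 2 / 4 - n / 2) * ((-1) ^ s * (-1) ^ j₁) *
        ((q⁻¹ ^ 2) ^ s * q ^ (d₁ - 1)) : k)) = kh at *
  generalize hkk : (fun s => (((q⁻¹ ^ 2) ^ s * q ^ (d₁ - 1)) ^ (n ^ 2 / 4 - n / 2) * ((-1) ^ s * (-1) ^ j₁)) : ℕ → k) = kk at *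
  generalize hkg : (fun s => ((q⁻¹ ^ 2) ^ s * q ^ (d₁ - 1)) : ℕ → k) = kg at *
  replace hK1 : ∀ s, K k n q • E k n q ^ s • v = kk s • E k n q ^ s • v := by
    subst hkk; exact hK1
  replace hKh1 : ∀ s, Kh k n q • E k n q ^ s • v = kh s • E k n q ^ s • v := by
    subst hkh; exact hKh1
  replace hg1 : ∀ s, gg k n q • E k n q ^ s • v = kg s • E k n q ^ s • v := by
    subst hkg; exact hg1
  replace hkne : ∀ s, kh s ≠ 0 := by subst hkh; exact hkne
  replace hgne : ∀ s, kg s ≠ 0 := by subst hkg; exact hgne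
  have dd := fun t => diag H (K_eig H (hY.gv H t) (hY.zv H t))
  choose fl fi o0 o1 hfl0 hfl hfi ho0 ho1 ho using dd
  have dne : ∀ s t, kg s * o1 t + kh s * o0 t ≠ 0 := by
    intro s t
    rcases ho t with ⟨h0, h1⟩ | ⟨h0, h1⟩
    · rw [h0, h1, mul_zero, mul_one, add_zero]; exact hgne s
    · rw [h0, h1, mul_zero, mul_one, zero_add]; exact hkne s
  refine ⟨fun s t => (E k n q ^ s • v) ⊗ₜ (E k n q ^ t • u),
    fun s t => fl t * cc q d₁ s, fun s t => (kg s * o1 t + kh s * o0 t) * cc q d₂ t,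
    fun s t => fi t, fun s t => kk s ^ (n - 1) * o0 (t + 1) + o1 (t + 1), ?_⟩
  refine
    { hd₁ := hX.hd
      hd₂ := hY.hd
      hdN := hdN
      b0 := ?_
      F := ?_
      E := ?_
      g := ?_
      z := ?_
      A0 := fun t => by simp [cc_zero]
      B0 := fun t => by simp [cc_zero]
      Ad := fun t => by simp [cc_self H]
      Ane := fun s t h0 h1 h2 => mul_ne_zero (hfl0 t) (cc_ne H h0 h1 hX.hdN)
      Bne := fun s t h0 h1 h2 => mul_ne_zero (dne s t) (cc_ne H h0 h2 hY.hdN)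
      co := ?_
      fin := ?_
      rk := ?_ }
  · rintro s t (h | h)
    · simp only [hX.Epow h, TensorProduct.zero_tmul]
    · simp only [hY.Epow h, TensorProduct.tmul_zero]
  · intro s t
    have e1 : gg k n q • E k n q ^ s • v = kg s • E k n q ^ s • v := hg1 s
    change act k n q X Y (Δ (F k n q)) _ = _
    rw [ΔF, map_add, map_add, LinearMap.add_apply, LinearMap.add_apply, act_tmul, act_tmul, act_tmul]
    change _ + (gg k n q • _) ⊗ₜ _ + _ = _
    rw [mul_smul, mul_smul, e1, hKh1, hfl, ho0, ho1, smul_comm (F k n q) (o1 t), smul_comm (F k n q) (o0 t),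
      hX.Fv H, hY.Fv H]
    simp only [TensorProduct.smul_tmul', TensorProduct.tmul_smul, smul_smul, add_mul, add_smul]
    rw [add_assoc]
    congr 3
    · ring
    · ring
  · intro s t
    change act k n q X Y (Δ (E k n q)) _ = _
    rw [ΔE, map_add, map_add, LinearMap.add_apply, LinearMap.add_apply, act_tmul, act_tmul, act_tmul]
    have e3 : E k n q • E k n q ^ t • u = E k n q ^ (t + 1) • u := by rw [← mul_smul, ← pow_succ']
    have e4 : E k n q • E k n q ^ s • v = E k n q ^ (s + 1) • v := by rw [← mul_smul, ← pow_succ']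
    have e5 : Kinv k n q • E k n q ^ s • v = kk s ^ (n - 1) • E k n q ^ s • v := pow_smul_eig (hK1 s) (n - 1)
    rw [mul_smul, mul_smul, e3, e4, e5, hfi, ho0, ho1, one_smul]
    simp only [TensorProduct.smul_tmul', TensorProduct.tmul_smul, smul_smul, add_smul]
    rw [add_assoc]
    congr 3
    ring
  · intro s t
    change act k n q X Y (Δ (gg k n q)) _ = _
    rw [Δg, act_tmul, hX.gv H, hY.gv H]
    simp only [TensorProduct.smul_tmul', TensorProduct.tmul_smul, smul_smul]
    congr 1
    rw [pow_add, pow_add]; ring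
  · intro s t
    change act k n q X Y (Δ (zz k n q)) _ = _
    rw [Δz, act_tmul, hX.zv H, hY.zv H]
    simp only [TensorProduct.smul_tmul', TensorProduct.tmul_smul, smul_smul]
    congr 1
    rw [pow_add, pow_add, pow_add]; ring
  · intro s t hs ht
    obtain ⟨φ, hφ⟩ := ty_co hX s hs
    obtain ⟨ψ, hψ⟩ := ty_co hY t ht
    refine ⟨LinearMap.mul' k k ∘ₗ TensorProduct.map φ ψ, fun s' t' => ?_⟩
    simp only [LinearMap.comp_apply, TensorProduct.map_tmul, LinearMap.mul'_apply, hφ, hψ]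
    split_ifs <;> simp_all
  · haveI := hX.finite
    haveI := hY.finite
    infer_instance
  · rw [Module.finrank_tensorProduct, hX.finrank_eq, hY.finrank_eq]

theorem tens_decomp [CharZero k] (H : Hyp k n q) (Δ : U k n q →ₐ[k] (U k n q ⊗[k] U k n q)) (hΔ : IsComul k n q Δ)
    {d₁ d₂ j₁ j₂ : ℕ} {v : X} {u : Y} (hX : IsTy k n q X d₁ j₁ v) (hY : IsTy k n q Y d₂ j₂ u)
    (hdN : d₁ + d₂ ≤ n ^ 2) (r : ℕ) (hr : r = min d₁ d₂) (Z : Fin r → Type) [∀ l, AddCommGroup (Z l)]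
    [∀ l, Module k (Z l)] [∀ l, Module (U k n q) (Z l)] [∀ l, IsScalarTower k (U k n q) (Z l)]
    (hZ : ∀ l : Fin r, ∃ (D jj : ℕ) (v : Z l), IsTy k n q (Z l) D jj v ∧ D = d₁ + d₂ - 1 - 2 * (r - 1 - l) ∧
      (-1 : k) ^ jj = (-1) ^ (r - 1 - l + (j₁ + j₂))) :
    letI := tensorModule k n q Δ X Y
    Nonempty ((X ⊗[k] Y) ≃ₗ[U k n q] DirectSum (Fin r) Z) := by
  letI := tensorModule k n q Δ X Y
  have ht : Tower k n q (X ⊗[k] Y) := tens_tower Δ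
  obtain ⟨b, A, B, A', B', hT⟩ := tens_TT H Δ hΔ hX hY hdN
  exact @TT.decomp k _ n q _ _ _ (_) ht _ _ _ _ _ _ _ _ H hT r hr Z _ _ _ _ hZ

end TenB
end QFL


open QFL DirectSum in
/-- Lemma 4.4 / Theorem 4.8 (a), (b): decomposition of `S_{2i₁,j₁} ⊗ S_{2i₂,j₂}` into
simples when `2i₁-1 ≥ n²-2i₂+1`. -/
theorem statement18 (k : Type) [Field k] [IsAlgClosed k] [CharZero k]
    (n : ℕ) (hn : 0 < n) (h4 : 4 ∣ n) (q : k) (hq : IsPrimitiveRoot q (n ^ 2))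
    (Δ : U k n q →ₐ[k] (U k n q ⊗[k] U k n q)) (hΔ : IsComul k n q Δ) :
    ∀ i₁ i₂ j₁ j₂ : ℕ, 1 ≤ i₁ → i₁ ≤ n ^ 2 / 2 → 1 ≤ i₂ → i₂ ≤ n ^ 2 / 2 →
      j₁ ≤ 1 → j₂ ≤ 1 → n ^ 2 - 2 * i₂ + 1 ≤ 2 * i₁ - 1 →
      letI := tensorModule k n q Δ (S k n q i₁ j₁) (S k n q i₂ j₂)
      (i₁ ≤ i₂ →
        Nonempty (((S k n q i₁ j₁) ⊗[k] (S k n q i₂ j₂)) ≃ₗ[U k n q]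
          (⨁ l : Fin (n ^ 2 - 2 * i₂ + 1),
            (S k n q (n ^ 2 / 2 + i₁ - i₂ - l) ((j₁ + j₂ + l) % 2))))) ∧
      (i₂ < i₁ →
        Nonempty (((S k n q i₁ j₁) ⊗[k] (S k n q i₂ j₂)) ≃ₗ[U k n q]
          (⨁ l : Fin (n ^ 2 - 2 * i₁ + 1),
            (S k n q (n ^ 2 / 2 - i₁ + i₂ - l) ((j₁ + j₂ + l) % 2))))) := by
  intro i₁ i₂ j₁ j₂ h1 h1' h2 h2' hj1 hj2 hd
  have H : Hyp k n q := ⟨hn, h4, hq⟩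
  obtain ⟨v₁, hv₁⟩ := S_ty H h1 h1' hj1
  obtain ⟨v₂, hv₂⟩ := S_ty H h2 h2' hj2
  have hN : 4 ∣ n ^ 2 := dvd_pow h4 two_ne_zero
  have par : ∀ a c : ℕ, a % 2 = c % 2 → (-1 : k) ^ a = (-1) ^ c := by
    intro a c hac
    rw [neg_one_pow_eq_pow_mod_two, hac, ← neg_one_pow_eq_pow_mod_two]
  constructor
  · intro hi
    refine tens_decomp H Δ hΔ hv₁ hv₂ (by omega) (n ^ 2 - 2 * i₂ + 1) (by omega)
      (fun l => S k n q (n ^ 2 / 2 + i₁ - i₂ - l) ((j₁ + j₂ + l) % 2)) (fun l => ?_)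
    have hl := l.2
    obtain ⟨v, hv⟩ := S_ty (k := k) (n := n) (q := q) (i := n ^ 2 / 2 + i₁ - i₂ - l) (j := (j₁ + j₂ + l) % 2)
      H (by omega) (by omega) (by omega)
    exact ⟨_, _, v, hv, by omega, par _ _ (by omega)⟩
  · intro hi
    refine tens_decomp H Δ hΔ hv₁ hv₂ (by omega) (n ^ 2 - 2 * i₁ + 1) (by omega)
      (fun l => S k n q (n ^ 2 / 2 - i₁ + i₂ - l) ((j₁ + j₂ + l) % 2)) (fun l => ?_)
    have hl := l.2
    obtain ⟨v, hv⟩ := S_ty (k := k) (n := n) (q := q) (i := n ^ 2 / 2 - i₁ + i₂ - l) (j := (j₁ + j₂ + l) % 2)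
      H (by omega) (by omega) (by omega)
    exact ⟨_, _, v, hv, by omega, par _ _ (by omega)⟩
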